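/- arXiv:1707.07470 — 2 statements merged into one kernel-verified Lean document; each statement's English description precedes it below -/
import Mathlib

section
/- Cut-off estimates (Lemma A.5): Let d ≥ 1, η ∈ (0,1/4), C₀ > 0, and let θ : ℝ → ℝ be a smooth compactly supported function with 0 ≤ θ ≤ 1, θ(s) = 0 for |s| ≥ 1 − 2η, θ(s) = 1 for |s| ≤ 1 − 3η, and |θ^{(j)}(s)| ≤ C₀·η^{−j} for all s and j = 1, 2, 3. Set Θ(x) := θ(|x|²) for x ∈ ℝ^d. Then there is a constant C, depending only on d and C₀ (not on η, θ, or ψ), such that: (i) for every k ∈ {0,1,2} and every ψ ∈ W^{k,∞}(ℝ^d) vanishing outside the closed unit ball, ‖Θψ‖_{W^{k,∞}} ≤ C·‖ψ‖_{W^{k,∞}}; (ii) for all integers 0 ≤ ℓ ≤ k ≤ 3 and every ψ ∈ W^{k,∞}(ℝ^d) vanishing outside the closed unit ball, ‖(1 − Θ)ψ‖_{W^{ℓ,∞}} ≤ C·η^{k−ℓ}·‖ψ‖_{W^{k,∞}}. -/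
open scoped NNReal

/-- `ψ ∈ W^{k,∞}` with `‖ψ‖_{W^{k,∞}} ≤ A`.  For `k = 0` this means `ψ` is a
bounded measurable function with `sup|ψ| ≤ A`; for `k = m+1` it means `ψ` is
`C^m`, `sup‖D^jψ‖ ≤ A` for `j ≤ m`, and `D^mψ` is `A`-Lipschitz. -/
def WBound {E : Type*} [NormedAddCommGroup E] [NormedSpace ℝ E]
    [MeasurableSpace E] (k : ℕ) (A : ℝ) (ψ : E → ℝ) : Prop :=
  match k with
  | 0 => Measurable ψ ∧ ∀ x, |ψ x| ≤ A
  | (m + 1) =>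
      ContDiff ℝ m ψ ∧ (∀ j ≤ m, ∀ x, ‖iteratedFDeriv ℝ j ψ x‖ ≤ A) ∧
      LipschitzWith A.toNNReal (iteratedFDeriv ℝ m ψ)


namespace CutoffAux

variable {E : Type*} [NormedAddCommGroup E] [InnerProductSpace ℝ E]

lemma id_bound (x : E) (hx : ‖x‖ ≤ 1) (i : ℕ) :
    ‖iteratedFDeriv ℝ i (fun y : E => y) x‖ ≤ 1 := by
  match i with
  | 0 => simpa using hx
  | 1 =>
    rw [norm_iteratedFDeriv_one, fderiv_fun_id]
    exact ContinuousLinearMap.norm_id_le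
  | (n + 2) =>
    have : fderiv ℝ (fun y : E => y) = fun _ => ContinuousLinearMap.id ℝ E := by
      ext1 y; exact fderiv_fun_id
    rw [← norm_iteratedFDeriv_fderiv, this, iteratedFDeriv_succ_const]
    simp

lemma sq_bound (x : E) (hx : ‖x‖ ≤ 1) (i : ℕ) :
    ‖iteratedFDeriv ℝ i (fun y : E => ‖y‖ ^ 2) x‖ ≤ 2 ^ i := by
  have h : ‖iteratedFDeriv ℝ i (fun y : E => inner ℝ y y) x‖ ≤ _ := (innerSL ℝ (E := E)).norm_iteratedFDeriv_le_of_bilinear_of_le_one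
    (f := fun y : E => y) (g := fun y : E => y) (N := i) contDiff_id contDiff_id x le_rfl
    (norm_innerSL_le (𝕜 := ℝ) (E := E))
  simp only [real_inner_self_eq_norm_sq] at h
  refine h.trans ?_
  calc _ ≤ ∑ k ∈ Finset.range (i + 1), (i.choose k : ℝ) := by
        refine Finset.sum_le_sum fun k _ => ?_
        have h1 := id_bound x hx k
        have h2 := id_bound x hx (i - k)
        calc _ ≤ (i.choose k : ℝ) * 1 * 1 := by gcongr
          _ = _ := by ring
    _ = 2 ^ i := by exact_mod_cast Nat.sum_range_choose i

lemma zero_of_eventually {F : E → ℝ} {c : ℝ} {x : E} (h : F =ᶠ[nhds x] fun _ => c) (j : ℕ)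
    (hj : c = 0 ∨ 1 ≤ j) : iteratedFDeriv ℝ j F x = 0 := by
  rw [(h.iteratedFDeriv ℝ j).eq_of_nhds]
  rcases hj with rfl | hj
  · simp
  · rw [iteratedFDeriv_const_of_ne (by omega)]; rfl

lemma phi_bound (C₀ : ℝ) (hC₀ : 0 < C₀) (η : ℝ) (h0 : 0 < η) (h1 : η < 1 / 4)
    (θ : ℝ → ℝ) (hθ : ContDiff ℝ (⊤ : ℕ∞) θ) (hr : ∀ s, 0 ≤ θ s ∧ θ s ≤ 1)
    (hz : ∀ s : ℝ, 1 - 2 * η ≤ |s| → θ s = 0)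
    (hb : ∀ j : ℕ, 1 ≤ j → j ≤ 3 → ∀ s, |iteratedDeriv j θ s| ≤ C₀ * (η ^ j)⁻¹)
    (i : ℕ) (hi : i ≤ 3) (x : E) :
    ‖iteratedFDeriv ℝ i (fun y : E => 1 - θ (‖y‖ ^ 2)) x‖ ≤ 48 * (1 + C₀) * (η ^ i)⁻¹ := by
  rcases le_or_gt ‖x‖ 1 with hx | hx
  · have hg : ContDiff ℝ (⊤ : ℕ∞) (fun s => 1 - θ (η * s)) := by fun_prop
    have hf : ContDiff ℝ (⊤ : ℕ∞) (fun y : E => η⁻¹ * ‖y‖ ^ 2) :=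
      contDiff_const.mul (contDiff_norm_sq ℝ)
    have key := norm_iteratedFDeriv_comp_le hg hf (n := i) (by exact_mod_cast le_top) x
      (C := 1 + C₀) (D := 2 * η⁻¹) ?_ ?_
    · have e : (fun s => 1 - θ (η * s)) ∘ (fun y : E => η⁻¹ * ‖y‖ ^ 2)
          = fun y : E => 1 - θ (‖y‖ ^ 2) := by
        funext y
        simp [mul_inv_cancel_left₀ h0.ne']
      rw [e] at key
      refine key.trans ?_
      rw [mul_pow, inv_pow]
      have h2 : (i.factorial : ℝ) * 2 ^ i ≤ 48 := by
        interval_cases i <;> norm_num [Nat.factorial]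
      have : 0 ≤ (1 + C₀) * (η ^ i)⁻¹ := by positivity
      nlinarith
    · intro j hj
      rw [norm_iteratedFDeriv_eq_norm_iteratedDeriv, Real.norm_eq_abs]
      rcases Nat.eq_zero_or_pos j with rfl | hj0
      · have := hr (η * (η⁻¹ * ‖x‖ ^ 2))
        rw [iteratedDeriv_zero, abs_le]
        constructor <;> linarith
      · rw [iteratedDeriv_const_sub hj0]
        have e := congrFun (iteratedDeriv_comp_const_mul (n := j) (f := θ)
          (hθ.of_le (by exact_mod_cast le_top)) η) (η⁻¹ * ‖x‖ ^ 2)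
        rw [iteratedDeriv_neg, abs_neg, e]
        have hb' := hb j hj0 (hj.trans hi) (η * (η⁻¹ * ‖x‖ ^ 2))
        rw [abs_mul, abs_of_pos (pow_pos h0 j)]
        calc _ ≤ η ^ j * (C₀ * (η ^ j)⁻¹) := by gcongr
          _ = C₀ := by field_simp
          _ ≤ _ := by linarith
    · intro j hj1 hj
      have e : (fun y : E => η⁻¹ * ‖y‖ ^ 2) = η⁻¹ • (fun y : E => ‖y‖ ^ 2) := rfl
      rw [e, iteratedFDeriv_const_smul_apply (contDiff_norm_sq ℝ).contDiffAt, norm_smul,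
        Real.norm_of_nonneg (by positivity), mul_pow, mul_comm]
      have : η⁻¹ ≤ η⁻¹ ^ j := le_self_pow₀ (by rw [one_le_inv₀ h0]; linarith) (by omega)
      exact mul_le_mul (sq_bound x hx j) this (by positivity) (by positivity)
  · have hev : (fun y : E => 1 - θ (‖y‖ ^ 2)) =ᶠ[nhds x] fun _ => 1 := by
      filter_upwards [(continuous_norm.tendsto x).eventually (lt_mem_nhds hx)] with y hy
      rw [hz, sub_zero]
      rw [abs_of_nonneg (by positivity)]
      nlinarith
    rcases Nat.eq_zero_or_pos i with rfl | hi0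
    · rw [norm_iteratedFDeriv_zero, hev.eq_of_nhds]
      norm_num
      linarith
    · rw [zero_of_eventually hev i (Or.inr hi0), norm_zero]
      positivity

/-- Mean value inequality for iterated derivatives on a convex set. -/
lemma mvt {f : E → ℝ} {j n : ℕ} (hf : ContDiff ℝ n f) (hj : j < n) {s : Set E}
    (hs : Convex ℝ s) {C : ℝ} (hC : ∀ z ∈ s, ‖iteratedFDeriv ℝ (j + 1) f z‖ ≤ C)
    {x y : E} (hx : x ∈ s) (hy : y ∈ s) :
    ‖iteratedFDeriv ℝ j f y - iteratedFDeriv ℝ j f x‖ ≤ C * ‖y - x‖ := by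
  have hd := hf.differentiable_iteratedFDeriv (m := j) (by exact_mod_cast hj)
  exact Convex.norm_image_sub_le_of_norm_fderiv_le (𝕜 := ℝ) (fun z _ => hd z)
    (fun z hz => by rw [norm_fderiv_iteratedFDeriv]; exact hC z hz) hs hx hy

lemma psi_zero {ψ : E → ℝ} {n : ℕ} (hψ : ContDiff ℝ n ψ) (hv : ∀ x, 1 < ‖x‖ → ψ x = 0)
    {j : ℕ} (hj : j ≤ n) {y : E} (hy : ‖y‖ = 1) : iteratedFDeriv ℝ j ψ y = 0 := by
  have hc : Continuous (fun t : ℝ => iteratedFDeriv ℝ j ψ (t • y)) :=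
    (hψ.continuous_iteratedFDeriv (by exact_mod_cast hj)).comp (by fun_prop)
  have h1 : Filter.Tendsto (fun t : ℝ => iteratedFDeriv ℝ j ψ (t • y))
      (nhdsWithin 1 (Set.Ioi 1)) (nhds (iteratedFDeriv ℝ j ψ y)) := by
    have := (hc.tendsto 1).mono_left (nhdsWithin_le_nhds (s := Set.Ioi 1))
    simpa using this
  have h2 : Filter.Tendsto (fun t : ℝ => iteratedFDeriv ℝ j ψ (t • y))
      (nhdsWithin 1 (Set.Ioi 1)) (nhds 0) := by
    refine tendsto_const_nhds.congr' ?_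
    filter_upwards [self_mem_nhdsWithin] with t ht
    have ht' : 1 < ‖t • y‖ := by
      rw [norm_smul, hy, mul_one]; exact lt_of_lt_of_le ht (le_abs_self t)
    symm
    refine zero_of_eventually (c := 0) ?_ j (Or.inl rfl)
    filter_upwards [(continuous_norm.tendsto (t • y)).eventually (lt_mem_nhds ht')] with z hz
    exact hv z hz
  exact tendsto_nhds_unique h1 h2

lemma psi_decay {ψ : E → ℝ} {n : ℕ} {A : ℝ} (hA : 0 ≤ A) (hψ : ContDiff ℝ n ψ)
    (hL : LipschitzWith A.toNNReal (iteratedFDeriv ℝ n ψ))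
    (hv : ∀ x, 1 < ‖x‖ → ψ x = 0) {y : E} (hy : ‖y‖ = 1) {r : ℝ} (hr : 0 ≤ r)
    (p : ℕ) : ∀ j, j + p = n → ∀ x ∈ Metric.closedBall y r,
    ‖iteratedFDeriv ℝ j ψ x‖ ≤ A * r ^ (p + 1) := by
  induction p with
  | zero =>
    intro j hj x hx
    obtain rfl : j = n := by omega
    have := hL.dist_le_mul x y
    rw [psi_zero hψ hv le_rfl hy, dist_zero_right, Real.coe_toNNReal _ hA] at this
    refine this.trans ?_
    rw [zero_add, pow_one]
    gcongr
    exact hx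
  | succ p ih =>
    intro j hj x hx
    have hm := mvt hψ (j := j) (by omega) (convex_closedBall y r)
      (ih (j + 1) (by omega)) (Metric.mem_closedBall_self hr) hx
    rw [psi_zero hψ hv (by omega) hy, sub_zero] at hm
    refine hm.trans ?_
    rw [pow_succ r (p + 1), ← mul_assoc]
    gcongr
    rw [← dist_eq_norm]; exact hx

lemma psi_lip {ψ : E → ℝ} {n : ℕ} {A : ℝ} (hA : 0 ≤ A) (hψ : ContDiff ℝ n ψ)
    (hL : LipschitzWith A.toNNReal (iteratedFDeriv ℝ n ψ))
    (hv : ∀ x, 1 < ‖x‖ → ψ x = 0) {y : E} (hy : ‖y‖ = 1) {r : ℝ} (hr : 0 ≤ r)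
    (p j : ℕ) (hj : j + p = n) {x z : E} (hx : x ∈ Metric.closedBall y r)
    (hz : z ∈ Metric.closedBall y r) :
    ‖iteratedFDeriv ℝ j ψ z - iteratedFDeriv ℝ j ψ x‖ ≤ A * r ^ p * ‖z - x‖ := by
  rcases p with _ | p
  · obtain rfl : j = n := by omega
    have := hL.dist_le_mul z x
    rw [Real.coe_toNNReal _ hA, dist_eq_norm, dist_eq_norm] at this
    simpa using this
  · exact mvt hψ (by omega) (convex_closedBall y r)
      (psi_decay hA hψ hL hv hy hr p (j + 1) (by omega)) hx hz

lemma near_point {η : ℝ} (h1 : η < 1 / 4) {x : E}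
    (hx1 : 1 - 4 * η ≤ ‖x‖) (hx2 : ‖x‖ ≤ 1 + 4 * η) :
    ∃ y : E, ‖y‖ = 1 ∧ x ∈ Metric.closedBall y (4 * η) := by
  have hx : 0 < ‖x‖ := by linarith
  refine ⟨‖x‖⁻¹ • x, ?_, ?_⟩
  · rw [norm_smul, norm_inv, norm_norm, inv_mul_cancel₀ hx.ne']
  · rw [Metric.mem_closedBall, dist_eq_norm]
    have : x - ‖x‖⁻¹ • x = (1 - ‖x‖⁻¹) • x := by rw [sub_smul, one_smul]
    rw [this, norm_smul, Real.norm_eq_abs]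
    calc |1 - ‖x‖⁻¹| * ‖x‖ = |1 - ‖x‖⁻¹| * |‖x‖| := by rw [abs_of_pos hx]
      _ = |‖x‖ - 1| := by rw [← abs_mul, sub_mul, inv_mul_cancel₀ hx.ne', one_mul]
      _ ≤ 4 * η := by rw [abs_le]; constructor <;> linarith

lemma prod_zero {φ ψ : E → ℝ} {η : ℝ}
    (hφz : ∀ x, ‖x‖ < 1 - 3 * η → φ x = 0) (hv : ∀ x, 1 < ‖x‖ → ψ x = 0) (m : ℕ) {x : E}
    (hx : ‖x‖ < 1 - 3 * η ∨ 1 < ‖x‖) : iteratedFDeriv ℝ m (fun y => φ y * ψ y) x = 0 := by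
  refine zero_of_eventually (c := 0) ?_ m (Or.inl rfl)
  rcases hx with hx | hx
  · filter_upwards [(continuous_norm.tendsto x).eventually (gt_mem_nhds hx)] with z hz
    rw [hφz z hz, zero_mul]
  · filter_upwards [(continuous_norm.tendsto x).eventually (lt_mem_nhds hx)] with z hz
    rw [hv z hz, mul_zero]

lemma pow_aux {η : ℝ} (h0 : 0 < η) {p i : ℕ} (h : p + i ≤ 3) :
    (η ^ i)⁻¹ * (5 * η) ^ (p + i) ≤ 125 * η ^ p := by
  have e : (η ^ i)⁻¹ * (5 * η) ^ (p + i) = 5 ^ (p + i) * η ^ p := by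
    rw [mul_pow, pow_add η]; field_simp
  rw [e]
  have : (5 : ℝ) ^ (p + i) ≤ 5 ^ 3 := pow_le_pow_right₀ (by norm_num) h
  have hp := pow_pos h0 p
  nlinarith

lemma sum_aux {m : ℕ} (hm : m ≤ 2) {a b : ℕ → ℝ} {T : ℝ} (hT : 0 ≤ T)
    (h : ∀ i ≤ m, a i * b i ≤ T) :
    ∑ i ∈ Finset.range (m + 1), (m.choose i : ℝ) * a i * b i ≤ 4 * T := by
  calc _ ≤ ∑ i ∈ Finset.range (m + 1), (m.choose i : ℝ) * T := by
        refine Finset.sum_le_sum fun i hi => ?_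
        rw [mul_assoc]
        exact mul_le_mul_of_nonneg_left (h i (by simpa [Nat.lt_succ_iff] using hi))
          (by positivity)
    _ = 2 ^ m * T := by
        rw [← Finset.sum_mul]; congr 1; exact_mod_cast Nat.sum_range_choose m
    _ ≤ 2 ^ 2 * T := by gcongr; norm_num
    _ = 4 * T := by ring

section main
variable {φ ψ : E → ℝ} {η K A : ℝ} {n : ℕ}

lemma sup_bound (h0 : 0 < η) (h1 : η < 1 / 4) (hK : 0 ≤ K) (hA : 0 ≤ A)
    (hφ : ContDiff ℝ (⊤ : ℕ∞) φ)
    (hφb : ∀ i ≤ 3, ∀ x, ‖iteratedFDeriv ℝ i φ x‖ ≤ K * (η ^ i)⁻¹)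
    (hφz : ∀ x, ‖x‖ < 1 - 3 * η → φ x = 0) (hψ : ContDiff ℝ n ψ)
    (hL : LipschitzWith A.toNNReal (iteratedFDeriv ℝ n ψ))
    (hv : ∀ x, 1 < ‖x‖ → ψ x = 0) (hn : n ≤ 2) {m q : ℕ} (hm : m + q = n) (x : E) :
    ‖iteratedFDeriv ℝ m (fun y => φ y * ψ y) x‖ ≤ 500 * K * A * η ^ (q + 1) := by
  by_cases hx : ‖x‖ < 1 - 4 * η ∨ 1 + 4 * η < ‖x‖
  · rw [prod_zero hφz hv m (by rcases hx with h | h; (left; linarith); (right; linarith)),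
      norm_zero]
    positivity
  push Not at hx
  obtain ⟨y, hy, hxy⟩ := near_point h1 hx.1 hx.2
  have hxy' : x ∈ Metric.closedBall y (5 * η) := Metric.closedBall_subset_closedBall (by linarith) hxy
  have hml : (m : WithTop ℕ∞) ≤ n := by exact_mod_cast (by omega : m ≤ n)
  have hmt : (m : WithTop ℕ∞) ≤ (⊤ : ℕ∞) := by exact_mod_cast le_top
  refine (norm_iteratedFDeriv_mul_le (N := m) (hφ.of_le hmt) (hψ.of_le hml) x le_rfl).trans ?_
  refine (sum_aux (by omega) (T := 125 * K * A * η ^ (q + 1)) (by positivity) ?_).trans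
    (by linarith)
  intro i hi
  have b1 := hφb i (by omega) x
  have b2 := psi_decay hA hψ hL hv hy (by positivity : 0 ≤ 5 * η) (q + i) (m - i) (by omega) x hxy'
  calc _ ≤ (K * (η ^ i)⁻¹) * (A * (5 * η) ^ (q + i + 1)) := by gcongr
    _ = K * A * ((η ^ i)⁻¹ * (5 * η) ^ (q + 1 + i)) := by
      rw [show q + i + 1 = q + 1 + i by ring]; ring
    _ ≤ K * A * (125 * η ^ (q + 1)) :=
      mul_le_mul_of_nonneg_left (pow_aux (p := q + 1) (i := i) h0 (by omega)) (by positivity)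
    _ = _ := by ring

lemma lip_bound (h0 : 0 < η) (h1 : η < 1 / 4) (hK : 0 ≤ K) (hA : 0 ≤ A)
    (hφ : ContDiff ℝ (⊤ : ℕ∞) φ)
    (hφb : ∀ i ≤ 3, ∀ x, ‖iteratedFDeriv ℝ i φ x‖ ≤ K * (η ^ i)⁻¹)
    (hφz : ∀ x, ‖x‖ < 1 - 3 * η → φ x = 0) (hψ : ContDiff ℝ n ψ)
    (hL : LipschitzWith A.toNNReal (iteratedFDeriv ℝ n ψ))
    (hv : ∀ x, 1 < ‖x‖ → ψ x = 0) (hn : n ≤ 2) {m q : ℕ} (hm : m + q = n) (x h : E) :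
    ‖iteratedFDeriv ℝ m (fun y => φ y * ψ y) (x + h) -
      iteratedFDeriv ℝ m (fun y => φ y * ψ y) x‖ ≤ 1000 * K * A * η ^ q * ‖h‖ := by
  rcases lt_or_ge η ‖h‖ with hh | hh
  · have s1 := sup_bound h0 h1 hK hA hφ hφb hφz hψ hL hv hn hm (x + h)
    have s2 := sup_bound h0 h1 hK hA hφ hφb hφz hψ hL hv hn hm x
    calc _ ≤ 500 * K * A * η ^ (q + 1) + 500 * K * A * η ^ (q + 1) :=
          (norm_sub_le _ _).trans (add_le_add s1 s2)
      _ = 1000 * K * A * η ^ q * η := by ring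
      _ ≤ _ := by gcongr
  have t1 : ‖x + h‖ ≤ ‖x‖ + ‖h‖ := norm_add_le _ _
  have t2 : ‖x‖ ≤ ‖x + h‖ + ‖h‖ := by simpa using norm_sub_le (x + h) h
  by_cases hx : ‖x‖ < 1 - 4 * η ∨ 1 + 4 * η < ‖x‖
  · rw [prod_zero hφz hv m (x := x)
        (by rcases hx with h | h; (left; linarith); (right; linarith)),
      prod_zero hφz hv m (x := x + h)
        (by rcases hx with h | h; (left; linarith); (right; linarith)), sub_zero, norm_zero]
    positivity
  push Not at hx
  obtain ⟨y, hy, hxy⟩ := near_point h1 hx.1 hx.2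
  have hxy' : x ∈ Metric.closedBall y (5 * η) := Metric.closedBall_subset_closedBall (by linarith) hxy
  have hxh : x + h ∈ Metric.closedBall y (5 * η) := by
    rw [Metric.mem_closedBall] at hxy ⊢
    have := dist_triangle (x + h) x y
    have e : dist (x + h) x = ‖h‖ := by simp [dist_eq_norm]
    linarith
  have hφm : ContDiff ℝ m φ := hφ.of_le (by exact_mod_cast le_top)
  have hψm : ContDiff ℝ m ψ := hψ.of_le (by exact_mod_cast (by omega : m ≤ n))
  have hφh : ContDiff ℝ m (fun z => φ (z + h)) := hφm.comp (by fun_prop)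
  have hψh : ContDiff ℝ m (fun z => ψ (z + h)) := hψm.comp (by fun_prop)
  have e1 : iteratedFDeriv ℝ m (fun y => φ y * ψ y) (x + h) -
      iteratedFDeriv ℝ m (fun y => φ y * ψ y) x =
      iteratedFDeriv ℝ m (fun z => φ (z + h) * (ψ (z + h) - ψ z)) x +
      iteratedFDeriv ℝ m (fun z => (φ (z + h) - φ z) * ψ z) x := by
    rw [← iteratedFDeriv_comp_add_right m h x,
      ← fun_iteratedFDeriv_sub_apply (hφh.mul hψh).contDiffAt (hφm.mul hψm).contDiffAt,
      ← fun_iteratedFDeriv_add_apply (hφh.mul (hψh.sub hψm)).contDiffAt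
        ((hφh.sub hφm).mul hψm).contDiffAt]
    congr 1
    funext z; ring
  have T1 := (norm_iteratedFDeriv_mul_le (N := m) hφh (hψh.sub hψm) x le_rfl).trans
    (sum_aux (by omega) (T := 125 * K * A * η ^ q * ‖h‖) (by positivity) (by
      intro i hi
      have hmi : ((m - i : ℕ) : WithTop ℕ∞) ≤ m := by exact_mod_cast Nat.sub_le m i
      rw [fun_iteratedFDeriv_sub_apply (hψh.of_le hmi).contDiffAt (hψm.of_le hmi).contDiffAt,
        iteratedFDeriv_comp_add_right, iteratedFDeriv_comp_add_right]
      have b1 := hφb i (by omega) (x + h)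
      have b2 := psi_lip hA hψ hL hv hy (by positivity : 0 ≤ 5 * η) (q + i) (m - i) (by omega)
        hxy' hxh
      rw [add_sub_cancel_left] at b2
      calc _ ≤ (K * (η ^ i)⁻¹) * (A * (5 * η) ^ (q + i) * ‖h‖) := by gcongr
        _ = K * A * ‖h‖ * ((η ^ i)⁻¹ * (5 * η) ^ (q + i)) := by ring
        _ ≤ K * A * ‖h‖ * (125 * η ^ q) := mul_le_mul_of_nonneg_left
          (pow_aux (p := q) (i := i) h0 (by omega)) (by positivity)
        _ = _ := by ring))
  have T2 := (norm_iteratedFDeriv_mul_le (N := m) (hφh.sub hφm) hψm x le_rfl).trans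
    (sum_aux (by omega) (T := 125 * K * A * η ^ q * ‖h‖) (by positivity) (by
      intro i hi
      have hmi : (i : WithTop ℕ∞) ≤ m := by exact_mod_cast hi
      rw [fun_iteratedFDeriv_sub_apply (hφh.of_le hmi).contDiffAt (hφm.of_le hmi).contDiffAt,
        iteratedFDeriv_comp_add_right]
      have b1 := mvt (hφ.of_le (by exact_mod_cast le_top) : ContDiff ℝ (i + 1 : ℕ) φ)
        (Nat.lt_succ_self i) convex_univ (fun z _ => hφb (i + 1) (by omega) z)
        (Set.mem_univ x) (Set.mem_univ (x + h))
      rw [add_sub_cancel_left] at b1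
      have b2 := psi_decay hA hψ hL hv hy (by positivity : 0 ≤ 5 * η) (q + i) (m - i)
        (by omega) x hxy'
      calc _ ≤ (K * (η ^ (i + 1))⁻¹ * ‖h‖) * (A * (5 * η) ^ (q + i + 1)) := by gcongr
        _ = K * A * ‖h‖ * ((η ^ (i + 1))⁻¹ * (5 * η) ^ (q + (i + 1))) := by
          rw [← add_assoc]; ring
        _ ≤ K * A * ‖h‖ * (125 * η ^ q) := mul_le_mul_of_nonneg_left
          (pow_aux (p := q) (i := i + 1) h0 (by omega)) (by positivity)
        _ = _ := by ring))
  rw [e1]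
  refine (norm_add_le _ _).trans ((add_le_add T1 T2).trans (by linarith))

end main

lemma wbound_nonneg [MeasurableSpace E] {k : ℕ} {A : ℝ} {ψ : E → ℝ} (h : WBound k A ψ) :
    0 ≤ A := by
  cases k with
  | zero => exact (abs_nonneg _).trans (h.2 0)
  | succ m => exact (norm_nonneg _).trans (h.2.1 0 (Nat.zero_le _) 0)

lemma wbound_sub [MeasurableSpace E] {k : ℕ} {A B : ℝ} {f g : E → ℝ} (hf : WBound k A f)
    (hg : WBound k B g) : WBound k (A + B) (fun x => f x - g x) := by
  have hA := wbound_nonneg hf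
  have hB := wbound_nonneg hg
  cases k with
  | zero =>
    exact ⟨hf.1.sub hg.1, fun x => (abs_sub _ _).trans (add_le_add (hf.2 x) (hg.2 x))⟩
  | succ m =>
    obtain ⟨f1, f2, f3⟩ := hf
    obtain ⟨g1, g2, g3⟩ := hg
    refine ⟨f1.sub g1, fun j hj x => ?_, ?_⟩
    · have hjm : (j : WithTop ℕ∞) ≤ m := by exact_mod_cast hj
      rw [fun_iteratedFDeriv_sub_apply (f1.of_le hjm).contDiffAt (g1.of_le hjm).contDiffAt]
      exact (norm_sub_le _ _).trans (add_le_add (f2 j hj x) (g2 j hj x))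
    · rw [fun_iteratedFDeriv_sub f1 g1, Real.toNNReal_add hA hB]
      exact f3.sub g3

lemma wbound_mono [MeasurableSpace E] {k : ℕ} {A B : ℝ} {f : E → ℝ} (hf : WBound k A f)
    (h : A ≤ B) : WBound k B f := by
  cases k with
  | zero => exact ⟨hf.1, fun x => (hf.2 x).trans h⟩
  | succ m => exact ⟨hf.1, fun j hj x => (hf.2.1 j hj x).trans h,
      hf.2.2.weaken (Real.toNNReal_le_toNNReal h)⟩

lemma main_bound [MeasurableSpace E] [BorelSpace E] {φ ψ : E → ℝ} {η K A : ℝ}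
    (h0 : 0 < η) (h1 : η < 1 / 4) (hK : 1 ≤ K)
    (hφ : ContDiff ℝ (⊤ : ℕ∞) φ) (hφ1 : ∀ x, |φ x| ≤ 1)
    (hφb : ∀ i ≤ 3, ∀ x, ‖iteratedFDeriv ℝ i φ x‖ ≤ K * (η ^ i)⁻¹)
    (hφz : ∀ x, ‖x‖ < 1 - 3 * η → φ x = 0)
    (hv : ∀ x, 1 < ‖x‖ → ψ x = 0) {k l : ℕ} (hlk : l ≤ k) (hk : k ≤ 3)
    (hψ : WBound k A ψ) : WBound l (1000 * K * η ^ (k - l) * A) (fun x => φ x * ψ x) := by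
  have hA := wbound_nonneg hψ
  have hK0 : 0 ≤ K := by linarith
  rcases k with _ | n
  · obtain rfl : l = 0 := by omega
    refine ⟨hφ.continuous.measurable.mul hψ.1, fun x => ?_⟩
    rw [abs_mul]
    calc _ ≤ 1 * A := mul_le_mul (hφ1 x) (hψ.2 x) (abs_nonneg _) zero_le_one
      _ ≤ _ := by rw [Nat.sub_self, pow_zero, mul_one]; nlinarith
  obtain ⟨p1, _, p3⟩ := hψ
  rcases l with _ | m
  · refine ⟨hφ.continuous.measurable.mul p1.continuous.measurable, fun x => ?_⟩
    have := sup_bound h0 h1 hK0 hA hφ hφb hφz p1 p3 hv (by omega) (zero_add n) x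
    rw [norm_iteratedFDeriv_zero, Real.norm_eq_abs] at this
    refine this.trans ?_
    have : 0 ≤ K * A * η ^ (n + 1) := by positivity
    rw [Nat.sub_zero]; linarith
  · have hmn : m ≤ n := by omega
    have e : n + 1 - (m + 1) = n - m := by omega
    rw [e]
    refine ⟨(hφ.of_le (by exact_mod_cast le_top)).mul (p1.of_le (by exact_mod_cast hmn)),
      fun j hj x => ?_, ?_⟩
    · have := sup_bound h0 h1 hK0 hA hφ hφb hφz p1 p3 hv (by omega)
        (by omega : j + (n - j) = n) x
      refine this.trans ?_
      have hp : η ^ (n - j + 1) ≤ η ^ (n - m) :=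
        pow_le_pow_of_le_one h0.le (by linarith) (by omega)
      calc _ ≤ 500 * K * A * η ^ (n - m) := by gcongr
        _ ≤ 1000 * K * A * η ^ (n - m) := by gcongr; norm_num
        _ = _ := by ring
    · refine LipschitzWith.of_dist_le' fun x y => ?_
      have := lip_bound h0 h1 hK0 hA hφ hφb hφz p1 p3 hv (by omega)
        (by omega : m + (n - m) = n) y (x - y)
      rw [add_sub_cancel] at this
      rw [dist_eq_norm, dist_eq_norm]
      exact this.trans (le_of_eq (by ring))

end CutoffAux

/-- **Cut-off estimates.**  Let `η ∈ (0,1/4)` and `θ` be a smooth compactly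
supported function with `0 ≤ θ ≤ 1`, `θ = 0` on `{|s| ≥ 1−2η}`, `θ = 1` on
`{|s| ≤ 1−3η}` and `|θ^{(j)}| ≤ C₀η^{−j}` for `j = 1,2,3`, and set
`Θ(x) = θ(|x|²)`.  Then there is `C`, depending only on `d` and `C₀`, with
(i) `‖Θψ‖_{W^{k,∞}} ≤ C‖ψ‖_{W^{k,∞}}` for `k ∈ {0,1,2}` and `ψ ∈ W^{k,∞}`
vanishing outside the closed unit ball, and (ii)
`‖(1−Θ)ψ‖_{W^{ℓ,∞}} ≤ Cη^{k−ℓ}‖ψ‖_{W^{k,∞}}` for `0 ≤ ℓ ≤ k ≤ 3` and such `ψ`. -/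
theorem cutoff_estimates (d : ℕ) (hd : 1 ≤ d) (C₀ : ℝ) (hC₀ : 0 < C₀) :
    ∃ C : ℝ, 0 < C ∧ ∀ η : ℝ, 0 < η → η < 1 / 4 →
      ∀ θ : ℝ → ℝ, ContDiff ℝ (⊤ : ℕ∞) θ → HasCompactSupport θ →
        (∀ s, 0 ≤ θ s ∧ θ s ≤ 1) →
        (∀ s : ℝ, 1 - 2 * η ≤ |s| → θ s = 0) →
        (∀ s : ℝ, |s| ≤ 1 - 3 * η → θ s = 1) →
        (∀ j : ℕ, 1 ≤ j → j ≤ 3 → ∀ s, |iteratedDeriv j θ s| ≤ C₀ * (η ^ j)⁻¹) →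
        (∀ k : ℕ, k ≤ 2 →
          ∀ (ψ : EuclideanSpace ℝ (Fin d) → ℝ) (A : ℝ),
            WBound k A ψ → (∀ x, 1 < ‖x‖ → ψ x = 0) →
            WBound k (C * A) (fun x => θ (‖x‖ ^ 2) * ψ x)) ∧
        (∀ k l : ℕ, l ≤ k → k ≤ 3 →
          ∀ (ψ : EuclideanSpace ℝ (Fin d) → ℝ) (A : ℝ),
            WBound k A ψ → (∀ x, 1 < ‖x‖ → ψ x = 0) →
            WBound l (C * η ^ (k - l) * A) (fun x => (1 - θ (‖x‖ ^ 2)) * ψ x)) := by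
  have hK : 1 ≤ 48 * (1 + C₀) := by linarith
  refine ⟨1000 * (48 * (1 + C₀)) + 1, by positivity, ?_⟩
  intro η h0 h1 θ hθ _ hr hz ho hb
  have hφ : ContDiff ℝ (⊤ : ℕ∞) (fun y : EuclideanSpace ℝ (Fin d) => 1 - θ (‖y‖ ^ 2)) :=
    contDiff_const.sub (hθ.comp (contDiff_norm_sq ℝ))
  have hφ1 : ∀ x : EuclideanSpace ℝ (Fin d), |1 - θ (‖x‖ ^ 2)| ≤ 1 := by
    intro x
    have := hr (‖x‖ ^ 2)
    rw [abs_le]; constructor <;> linarith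
  have hφz : ∀ x : EuclideanSpace ℝ (Fin d), ‖x‖ < 1 - 3 * η → 1 - θ (‖x‖ ^ 2) = 0 := by
    intro x hx
    have hx0 := norm_nonneg x
    rw [ho, sub_self]
    rw [abs_of_nonneg (by positivity)]
    nlinarith
  have hφb := fun i hi x => CutoffAux.phi_bound (E := EuclideanSpace ℝ (Fin d))
    C₀ hC₀ η h0 h1 θ hθ hr hz hb i hi x
  have key : ∀ k l : ℕ, l ≤ k → k ≤ 3 → ∀ (ψ : EuclideanSpace ℝ (Fin d) → ℝ) (A : ℝ),
      WBound k A ψ → (∀ x, 1 < ‖x‖ → ψ x = 0) →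
      WBound l (1000 * (48 * (1 + C₀)) * η ^ (k - l) * A)
        (fun x => (1 - θ (‖x‖ ^ 2)) * ψ x) := fun k l hlk hk ψ A hψ hv =>
    CutoffAux.main_bound h0 h1 hK hφ hφ1 hφb hφz hv hlk hk hψ
  constructor
  · intro k hk ψ A hψ hv
    have h := CutoffAux.wbound_sub hψ (key k k le_rfl (by omega) ψ A hψ hv)
    have e : (fun x => ψ x - (1 - θ (‖x‖ ^ 2)) * ψ x) = fun x => θ (‖x‖ ^ 2) * ψ x := by
      funext x; ring
    rw [e] at h
    refine CutoffAux.wbound_mono h (le_of_eq ?_)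
    rw [Nat.sub_self, pow_zero]; ring
  · intro k l hlk hk ψ A hψ hv
    have hA := CutoffAux.wbound_nonneg hψ
    refine CutoffAux.wbound_mono (key k l hlk hk ψ A hψ hv) ?_
    gcongr
    linarith
end

section
/- Smoothing family adapted to the strip Ω (Corollary A.5): Let d ≥ 1 and Ω := {(x,y) ∈ ℝ^d×ℝ^d : |x−y| ≤ 2}; for k ∈ {0,1,2,3} let F_k denote the set of functions in W^{k,∞}(ℝ^d×ℝ^d) vanishing outside Ω. Let ρ : ℝ^d → ℝ be smooth, nonnegative, even, supported in the closed unit ball with ∫ρ = 1, and ρ_η(x) := η^{−d}ρ(x/η). Let (θ_η)_{η∈(0,1)} be smooth compactly supported functions on ℝ with 0 ≤ θ_η ≤ 1, θ_η(s) = 0 for |s| ≥ 1 − 2η, θ_η(s) = 1 for |s| ≤ 1 − 3η, and |θ_η^{(j)}| ≤ C₀·η^{−j} for j = 1,2,3; set Θ_η(x) := θ_η(|x|²) for x ∈ ℝ^d. For Φ : ℝ^d×ℝ^d → ℝ define (J_ηΦ)(x,y) := ∫∫_{ℝ^d×ℝ^d} Φ(x'_+ + x'_−, x'_+ − x'_−)·Θ_η(x'_−)·ρ_η((x+y)/2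 − x'_+)·ρ_η((x−y)/2 − x'_−) dx'_+ dx'_−. Then: (J1) for every Φ ∈ F_0, J_ηΦ is smooth and vanishes outside Ω, so J_η(F_k) ⊆ F_3 for all k ≤ 3; moreover there is a constant C, depending only on d, ρ and C₀, such that for all η ∈ (0,1): (J2) ‖J_ηΦ‖_{W^{ℓ,∞}} ≤ C·η^{−(ℓ−k)}·‖Φ‖_{W^{k,∞}} whenever Φ ∈ F_k, 0 ≤ k ≤ ℓ ≤ 3 and ℓ−k ≤ 2; (J3) ‖Φ − J_ηΦ‖_{W^{ℓ,∞}} ≤ C·η^{k−ℓ}·‖Φ‖_{W^{k,∞}} whenever Φ ∈ F_k, 0 ≤ ℓ ≤ k ≤ 3 and k−ℓ ≤ 2. -/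
open MeasureTheory
open scoped NNReal

/-- The smoothing operator adapted to the strip
`Ω = {(x,y) : |x−y| ≤ 2}`:
`(J_ηΦ)(x,y) = ∫∫ Φ(x'_+ + x'_−, x'_+ − x'_−) Θ_η(x'_−)
ρ_η((x+y)/2 − x'_+) ρ_η((x−y)/2 − x'_−) dx'_+ dx'_−`. -/
noncomputable def stripSmoothing {d : ℕ} (ρ : EuclideanSpace ℝ (Fin d) → ℝ)
    (θ : ℝ → ℝ) (η : ℝ)
    (Φ : EuclideanSpace ℝ (Fin d) × EuclideanSpace ℝ (Fin d) → ℝ)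
    (p : EuclideanSpace ℝ (Fin d) × EuclideanSpace ℝ (Fin d)) : ℝ :=
  ∫ xp : EuclideanSpace ℝ (Fin d), ∫ xm : EuclideanSpace ℝ (Fin d),
    Φ (xp + xm, xp - xm) * θ (‖xm‖ ^ 2) *
      ((η ^ d)⁻¹ * ρ (η⁻¹ • ((2 : ℝ)⁻¹ • (p.1 + p.2) - xp))) *
      ((η ^ d)⁻¹ * ρ (η⁻¹ • ((2 : ℝ)⁻¹ • (p.1 - p.2) - xm)))


set_option linter.unusedSectionVars false
section Calculus

variable {V : Type} [NormedAddCommGroup V] [NormedSpace ℝ V]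

lemma iter_zero_of_eventually {F : Type} [NormedAddCommGroup F] [NormedSpace ℝ F]
    {f : V → F} {p : V} (h : f =ᶠ[nhds p] fun _ => 0) (j : ℕ) :
    iteratedFDeriv ℝ j f p = 0 := by
  have h1 := (h.iteratedFDeriv (𝕜 := ℝ) j).self_of_nhds
  rw [h1]
  simp

lemma norm_iter_iter {F : Type} [NormedAddCommGroup F] [NormedSpace ℝ F]
    (m i : ℕ) (f : V → F) (x : V) :
    ‖iteratedFDeriv ℝ i (iteratedFDeriv ℝ m f) x‖ = ‖iteratedFDeriv ℝ (m + i) f x‖ := by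
  induction m generalizing F with
  | zero =>
    rw [iteratedFDeriv_zero_eq_comp, LinearIsometryEquiv.norm_iteratedFDeriv_comp_left, zero_add]
  | succ m ihm =>
    have e : iteratedFDeriv ℝ (m + 1) f =
      (continuousMultilinearCurryRightEquiv' ℝ m V F).symm ∘ (iteratedFDeriv ℝ m (fderiv ℝ f)) := by
      funext y
      exact iteratedFDeriv_succ_eq_comp_right
    have e2 := LinearIsometryEquiv.norm_iteratedFDeriv_comp_left (𝕜 := ℝ)
      (continuousMultilinearCurryRightEquiv' ℝ m V F).symm (iteratedFDeriv ℝ m (fderiv ℝ f)) x i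
    rw [ihm, norm_iteratedFDeriv_fderiv, show m + i + 1 = m + 1 + i by omega] at e2
    rw [← e2, e]

lemma iter_diff {F : Type} [NormedAddCommGroup F] [NormedSpace ℝ F]
    {m j : ℕ} {f : V → F} (hf : ContDiff ℝ m f) (hj : j < m) :
    Differentiable ℝ (iteratedFDeriv ℝ j f) :=
  hf.differentiable_iteratedFDeriv (by exact_mod_cast hj)

lemma iter_sub {F : Type} [NormedAddCommGroup F] [NormedSpace ℝ F]
    {i : ℕ} {f g : V → F} (hf : ContDiff ℝ i f) (hg : ContDiff ℝ i g) :
    iteratedFDeriv ℝ i (fun x => f x - g x) =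
      fun x => iteratedFDeriv ℝ i f x - iteratedFDeriv ℝ i g x := by
  funext x
  have h := congrFun (iteratedFDeriv_add (𝕜 := ℝ) hf hg.neg) x
  have e : (f + fun x => - g x) = fun x => f x - g x := by
    funext y; simp [sub_eq_add_neg]
  rw [e] at h
  rw [h, sub_eq_add_neg, Pi.add_apply]
  congr 1
  exact iteratedFDeriv_neg_apply

lemma iter_add {F : Type} [NormedAddCommGroup F] [NormedSpace ℝ F]
    {i : ℕ} {f g : V → F} (hf : ContDiff ℝ i f) (hg : ContDiff ℝ i g) :
    iteratedFDeriv ℝ i (fun x => f x + g x) =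
      fun x => iteratedFDeriv ℝ i f x + iteratedFDeriv ℝ i g x :=
  iteratedFDeriv_add (𝕜 := ℝ) hf hg

/-- Mean value for iterated derivatives on convex sets. -/
lemma iter_mvt {F : Type} [NormedAddCommGroup F] [NormedSpace ℝ F]
    {m j : ℕ} {f : V → F} (hf : ContDiff ℝ m f) (hj : j < m) {s : Set V} (hs : Convex ℝ s)
    {C : ℝ} (hC : ∀ x ∈ s, ‖iteratedFDeriv ℝ (j+1) f x‖ ≤ C) {x y : V} (hx : x ∈ s) (hy : y ∈ s) :
    ‖iteratedFDeriv ℝ j f y - iteratedFDeriv ℝ j f x‖ ≤ C * ‖y - x‖ := by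
  refine hs.norm_image_sub_le_of_norm_fderiv_le (𝕜 := ℝ) (fun z _ => (iter_diff hf hj z)) ?_ hx hy
  intro z hz
  rw [norm_fderiv_iteratedFDeriv]
  exact hC z hz

lemma lip_of_bound {F : Type} [NormedAddCommGroup F] {f : V → F} {A : ℝ} (hA : 0 ≤ A)
    (h : ∀ x y, ‖f x - f y‖ ≤ A * ‖x - y‖) : LipschitzWith A.toNNReal f := by
  apply LipschitzWith.of_dist_le_mul
  intro x y
  rw [dist_eq_norm, dist_eq_norm, Real.coe_toNNReal _ hA]
  exact h x y

lemma bound_of_lip {F : Type} [NormedAddCommGroup F] {f : V → F} {A : ℝ} (hA : 0 ≤ A)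
    (h : LipschitzWith A.toNNReal f) (x y : V) : ‖f x - f y‖ ≤ A * ‖x - y‖ := by
  have := h.dist_le_mul x y
  rwa [dist_eq_norm, dist_eq_norm, Real.coe_toNNReal _ hA] at this

/-- Lipschitz bounds at all levels. -/
lemma iter_lip_le {Φ : V → ℝ} {A : ℝ} {m : ℕ} (hΦ : ContDiff ℝ m Φ)
    (hb : ∀ j ≤ m, ∀ x, ‖iteratedFDeriv ℝ j Φ x‖ ≤ A)
    (hl : ∀ x y, ‖iteratedFDeriv ℝ m Φ x - iteratedFDeriv ℝ m Φ y‖ ≤ A * ‖x - y‖)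
    {j : ℕ} (hj : j ≤ m) (x y : V) :
    ‖iteratedFDeriv ℝ j Φ x - iteratedFDeriv ℝ j Φ y‖ ≤ A * ‖x - y‖ := by
  rcases hj.eq_or_lt with rfl | h
  · exact hl x y
  · exact iter_mvt hΦ h convex_univ (fun z _ => hb _ h z) (Set.mem_univ _) (Set.mem_univ _)

/-- Vanishing to order `m+1` at `q`. -/
lemma iter_vanish {Φ : V → ℝ} {A : ℝ} (hA : 0 ≤ A) {m : ℕ} (hΦ : ContDiff ℝ m Φ)
    (hl : ∀ x y, ‖iteratedFDeriv ℝ m Φ x - iteratedFDeriv ℝ m Φ y‖ ≤ A * ‖x - y‖)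
    {q : V} (hq : ∀ j ≤ m, iteratedFDeriv ℝ j Φ q = 0) {r : ℝ} (hr : 0 ≤ r) :
    ∀ i ≤ m, ∀ p ∈ Metric.closedBall q r, ‖iteratedFDeriv ℝ (m - i) Φ p‖ ≤ A * r ^ (i + 1) := by
  intro i
  induction i with
  | zero =>
    intro _ p hp
    have h := hl p q
    rw [hq m le_rfl, sub_zero] at h
    rw [mem_closedBall_iff_norm] at hp
    simp only [Nat.sub_zero, zero_add, pow_one]
    exact h.trans (by gcongr)
  | succ i ih =>
    intro hi p hp
    have hlt : m - (i+1) < m := by omega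
    have := iter_mvt hΦ hlt (convex_closedBall q r) (C := A * r ^ (i+1)) (fun x hx => by
      have := ih (by omega) x hx
      rwa [show m - i = m - (i+1) + 1 by omega] at this) (Metric.mem_closedBall_self hr) hp
    rw [hq _ (by omega), sub_zero] at this
    rw [mem_closedBall_iff_norm] at hp
    refine this.trans ?_
    rw [pow_succ r (i+1), ← mul_assoc]
    gcongr

lemma iter_vanish_diff {Φ : V → ℝ} {A : ℝ} (hA : 0 ≤ A) {m : ℕ} (hΦ : ContDiff ℝ m Φ)
    (hl : ∀ x y, ‖iteratedFDeriv ℝ m Φ x - iteratedFDeriv ℝ m Φ y‖ ≤ A * ‖x - y‖)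
    {q : V} (hq : ∀ j ≤ m, iteratedFDeriv ℝ j Φ q = 0) {r : ℝ} (hr : 0 ≤ r)
    (i : ℕ) (hi : i ≤ m) {p p' : V} (hp : p ∈ Metric.closedBall q r)
    (hp' : p' ∈ Metric.closedBall q r) :
    ‖iteratedFDeriv ℝ (m - i) Φ p - iteratedFDeriv ℝ (m - i) Φ p'‖ ≤ A * r ^ i * ‖p - p'‖ := by
  rcases i with _ | i
  · simpa using hl p p'
  · refine iter_mvt hΦ (by omega) (convex_closedBall q r) (fun x hx => ?_) hp' hp
    have := iter_vanish hA hΦ hl hq hr i (by omega) x hx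
    rwa [show m - i = m - (i+1) + 1 by omega] at this

end Calculus

section Product

variable {V : Type} [NormedAddCommGroup V] [NormedSpace ℝ V]

lemma pow5_aux {η : ℝ} (hη : 0 < η) {i n : ℕ} (hn : n + i ≤ 3) :
    (η ^ i)⁻¹ * (5 * η) ^ (n + i) ≤ 125 * η ^ n := by
  rw [mul_pow, pow_add η]
  have h5 : (5:ℝ) ^ (n+i) ≤ 5 ^ 3 := pow_le_pow_right₀ (by norm_num) hn
  have : (η ^ i)⁻¹ * (5 ^ (n + i) * (η ^ n * η ^ i)) = 5 ^ (n+i) * η ^ n := by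
    field_simp
  rw [this]
  have : 0 < η ^ n := by positivity
  nlinarith

lemma choose_sum_le {j : ℕ} (hj : j ≤ 2) {a : ℕ → ℝ} {c : ℝ} (hc : 0 ≤ c)
    (h : ∀ i ≤ j, a i ≤ (j.choose i : ℝ) * c) :
    ∑ i ∈ Finset.range (j + 1), a i ≤ 4 * c := by
  calc _ ≤ ∑ i ∈ Finset.range (j + 1), (j.choose i : ℝ) * c :=
        Finset.sum_le_sum fun i hi => h i (by simpa [Nat.lt_succ_iff] using hi)
    _ = (2:ℝ) ^ j * c := by
        rw [← Finset.sum_mul]; congr 1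
        exact_mod_cast Nat.sum_range_choose j
    _ ≤ 4 * c := by
        have : (2:ℝ) ^ j ≤ 2 ^ 2 := pow_le_pow_right₀ (by norm_num) hj
        nlinarith

variable {χ Φ : V → ℝ} {η A B : ℝ} {S : Set V} {m : ℕ}

lemma prod_iter (hη : 0 < η) (hA : 0 ≤ A) (hB : 0 ≤ B) (hm : m ≤ 2)
    (hχ : ContDiff ℝ (⊤ : ℕ∞) χ)
    (hχb : ∀ j ≤ 3, ∀ p, ‖iteratedFDeriv ℝ j χ p‖ ≤ B * (η ^ j)⁻¹)
    (hS : ∀ p ∉ S, ∀ j, iteratedFDeriv ℝ j χ p = 0)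
    (hΦ : ContDiff ℝ m Φ)
    (hl : ∀ x y, ‖iteratedFDeriv ℝ m Φ x - iteratedFDeriv ℝ m Φ y‖ ≤ A * ‖x - y‖)
    (hSq : ∀ p ∈ S, ∃ q, ‖p - q‖ ≤ 4 * η ∧ ∀ j ≤ m, iteratedFDeriv ℝ j Φ q = 0)
    {j : ℕ} (hj : j ≤ m) (p : V) :
    ‖iteratedFDeriv ℝ j (fun x => χ x * Φ x) p‖ ≤ 500 * B * A * η ^ (m + 1 - j) := by
  have hχm : ContDiff ℝ m χ := hχ.of_le (by exact_mod_cast le_top)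
  refine (norm_iteratedFDeriv_mul_le hχm hΦ p (n := j) (by exact_mod_cast hj)).trans ?_
  have hc : 0 ≤ B * A * (125 * η ^ (m+1-j)) := by positivity
  refine (choose_sum_le (hj.trans hm) hc ?_).trans (le_of_eq (by ring))
  intro i hi
  rw [mul_assoc]
  refine mul_le_mul_of_nonneg_left ?_ (Nat.cast_nonneg _)
  by_cases hp : p ∈ S
  · obtain ⟨q, hq, hq0⟩ := hSq p hp
    have h1 := iter_vanish hA hΦ hl hq0 (r := 5 * η) (by positivity) (m - (j - i)) (by omega) p
      (by rw [mem_closedBall_iff_norm]; linarith)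
    rw [show m - (m - (j - i)) = j - i by omega,
      show m - (j - i) + 1 = (m + 1 - j) + i by omega] at h1
    have h2 := hχb i (by omega) p
    have h3 := pow5_aux hη (i := i) (n := m + 1 - j) (by omega)
    calc _ ≤ (B * (η ^ i)⁻¹) * (A * (5 * η) ^ (m + 1 - j + i)) := by gcongr
      _ = B * A * ((η ^ i)⁻¹ * (5 * η) ^ (m + 1 - j + i)) := by ring
      _ ≤ _ := by gcongr
  · rw [hS p hp, norm_zero, zero_mul]; exact hc

lemma prod_lip (hη : 0 < η) (hA : 0 ≤ A) (hB : 0 ≤ B) (hm : m ≤ 2)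
    (hχ : ContDiff ℝ (⊤ : ℕ∞) χ)
    (hχb : ∀ j ≤ 3, ∀ p, ‖iteratedFDeriv ℝ j χ p‖ ≤ B * (η ^ j)⁻¹)
    (hS : ∀ p ∉ S, ∀ j, iteratedFDeriv ℝ j χ p = 0)
    (hΦ : ContDiff ℝ m Φ)
    (hl : ∀ x y, ‖iteratedFDeriv ℝ m Φ x - iteratedFDeriv ℝ m Φ y‖ ≤ A * ‖x - y‖)
    (hSq : ∀ p ∈ S, ∃ q, ‖p - q‖ ≤ 4 * η ∧ ∀ j ≤ m, iteratedFDeriv ℝ j Φ q = 0)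
    (x y : V) :
    ‖iteratedFDeriv ℝ m (fun x => χ x * Φ x) x - iteratedFDeriv ℝ m (fun x => χ x * Φ x) y‖
      ≤ 1000 * B * A * ‖x - y‖ := by
  have hχm : ContDiff ℝ m χ := hχ.of_le (by exact_mod_cast le_top)
  have hχ3 : ContDiff ℝ (3 : ℕ) χ := contDiff_infty.1 hχ 3
  rcases le_total η ‖x - y‖ with h | h
  · have hx := prod_iter hη hA hB hm hχ hχb hS hΦ hl hSq le_rfl x
    have hy := prod_iter hη hA hB hm hχ hχb hS hΦ hl hSq le_rfl y
    rw [show m + 1 - m = 1 by omega, pow_one] at hx hy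
    calc _ ≤ _ := norm_sub_le _ _
      _ ≤ 500 * B * A * η + 500 * B * A * η := add_le_add hx hy
      _ = 1000 * B * A * η := by ring
      _ ≤ _ := by gcongr
  · obtain ⟨v, rfl⟩ : ∃ v, y = x + v := ⟨y - x, by abel⟩
    have hv : ‖x - (x + v)‖ = ‖v‖ := by rw [sub_add_cancel_left, norm_neg]
    rw [hv] at h ⊢
    have hχv : ContDiff ℝ m (fun z => χ (z + v)) := hχm.comp (contDiff_id.add contDiff_const)
    have hΦv : ContDiff ℝ m (fun z => Φ (z + v)) := hΦ.comp (contDiff_id.add contDiff_const)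
    have key : iteratedFDeriv ℝ m (fun x => χ x * Φ x) x
        - iteratedFDeriv ℝ m (fun x => χ x * Φ x) (x + v)
        = iteratedFDeriv ℝ m (fun z => χ z * (Φ z - Φ (z + v))) x
          + iteratedFDeriv ℝ m (fun z => (χ z - χ (z + v)) * Φ (z + v)) x := by
      rw [← iteratedFDeriv_comp_add_right (𝕜 := ℝ) (f := fun x => χ x * Φ x) m v x]
      have e1 := congrFun (iter_sub (hχm.mul hΦ) (hχv.mul hΦv)) x
      have e2 := congrFun (iter_add (hχm.mul (hΦ.sub hΦv))
        ((hχm.sub hχv).mul hΦv)) x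
      rw [← e1, ← e2]
      congr 1
      funext z; ring
    rw [key]
    have t1 : ‖iteratedFDeriv ℝ m (fun z => χ z * (Φ z - Φ (z + v))) x‖
        ≤ 4 * (B * A * (125 * η ^ 0) * ‖v‖) := by
      refine (norm_iteratedFDeriv_mul_le hχm (hΦ.sub hΦv) x (n := m) le_rfl).trans ?_
      have hc : 0 ≤ B * A * (125 * η ^ 0) * ‖v‖ := by positivity
      refine choose_sum_le hm hc ?_
      intro i hi
      rw [mul_assoc]
      refine mul_le_mul_of_nonneg_left ?_ (Nat.cast_nonneg _)
      by_cases hp : x ∈ S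
      · obtain ⟨q, hq, hq0⟩ := hSq x hp
        have h1 := iter_vanish_diff hA hΦ hl hq0 (r := 5 * η) (by positivity) i hi (p := x)
          (p' := x + v) (by rw [mem_closedBall_iff_norm]; linarith)
          (by
            rw [mem_closedBall_iff_norm, add_sub_right_comm]
            exact (norm_add_le _ _).trans (by linarith))
        have h2 := hχb i (by omega) x
        have h3 := pow5_aux hη (i := i) (n := 0) (by omega)
        rw [zero_add] at h3
        have e1 := congrFun (iter_sub (i := m - i)
          (hΦ.of_le (by exact_mod_cast Nat.sub_le _ _))
          (hΦv.of_le (by exact_mod_cast Nat.sub_le _ _))) x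
        rw [e1, iteratedFDeriv_comp_add_right]
        rw [hv] at h1
        calc _ ≤ (B * (η ^ i)⁻¹) * (A * (5 * η) ^ i * ‖v‖) := by gcongr
          _ = B * A * ((η ^ i)⁻¹ * (5 * η) ^ i) * ‖v‖ := by ring
          _ ≤ _ := by gcongr
      · rw [hS x hp, norm_zero, zero_mul]; exact hc
    have t2 : ‖iteratedFDeriv ℝ m (fun z => (χ z - χ (z + v)) * Φ (z + v)) x‖
        ≤ 4 * (B * A * (125 * η ^ 0) * ‖v‖) := by
      refine (norm_iteratedFDeriv_mul_le (hχm.sub hχv) hΦv x (n := m) le_rfl).trans ?_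
      have hc : 0 ≤ B * A * (125 * η ^ 0) * ‖v‖ := by positivity
      refine choose_sum_le hm hc ?_
      intro i hi
      rw [mul_assoc]
      refine mul_le_mul_of_nonneg_left ?_ (Nat.cast_nonneg _)
      have e1 := congrFun (iter_sub (i := i)
          (hχm.of_le (by exact_mod_cast hi)) (hχv.of_le (by exact_mod_cast hi))) x
      rw [e1, iteratedFDeriv_comp_add_right, iteratedFDeriv_comp_add_right]
      by_cases hp : x ∈ S ∨ x + v ∈ S
      · obtain ⟨q, hq, hq0⟩ : ∃ q, ‖(x + v) - q‖ ≤ 5 * η ∧ ∀ j ≤ m, iteratedFDeriv ℝ j Φ q = 0 := by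
          rcases hp with hp | hp
          · obtain ⟨q, hq, hq0⟩ := hSq x hp
            refine ⟨q, ?_, hq0⟩
            rw [add_sub_right_comm]
            exact (norm_add_le _ _).trans (by linarith)
          · obtain ⟨q, hq, hq0⟩ := hSq _ hp
            exact ⟨q, by linarith, hq0⟩
        have h1 := iter_vanish hA hΦ hl hq0 (r := 5 * η) (by positivity) i hi (x + v)
          (by rw [mem_closedBall_iff_norm]; linarith)
        have h2 := iter_mvt (m := 3) (j := i) hχ3 (by omega) convex_univ
          (fun z _ => hχb (i+1) (by omega) z) (Set.mem_univ (x + v)) (Set.mem_univ x)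
        rw [hv] at h2
        have h3 := pow5_aux hη (i := i + 1) (n := 0) (by omega)
        rw [zero_add] at h3
        calc _ ≤ (B * (η ^ (i + 1))⁻¹ * ‖v‖) * (A * (5 * η) ^ (i + 1)) := by gcongr
          _ = B * A * ((η ^ (i+1))⁻¹ * (5 * η) ^ (i+1)) * ‖v‖ := by ring
          _ ≤ _ := by gcongr
      · push Not at hp
        rw [hS x hp.1, hS _ hp.2, sub_zero, norm_zero, zero_mul]; exact hc
    refine (norm_add_le _ _).trans ((add_le_add t1 t2).trans (le_of_eq (by ring)))

end Product

section Conv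

open scoped Convolution

/-- Hypotheses on the kernel. -/
structure KerHyp {V : Type} [NormedAddCommGroup V] [NormedSpace ℝ V] [MeasureSpace V]
    (R : V → ℝ) : Prop where
  smooth : ContDiff ℝ (⊤ : ℕ∞) R
  nonneg : ∀ z, 0 ≤ R z
  even : ∀ z, R (-z) = R z
  supp : ∀ z, 1 < ‖z‖ → R z = 0
  int_one : ∫ z, R z = 1

/-- The averaging operator. -/
noncomputable def avgT {V : Type} [NormedAddCommGroup V] [NormedSpace ℝ V] [MeasureSpace V]
    {F : Type} [NormedAddCommGroup F] [NormedSpace ℝ F]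
    (R : V → ℝ) (P : V →L[ℝ] V) (g : V → F) (p : V) : F := ∫ z, R z • g (p - P z)

variable {V : Type} [NormedAddCommGroup V] [NormedSpace ℝ V] [FiniteDimensional ℝ V]
  [SecondCountableTopology V] [MeasureSpace V] [BorelSpace V]
  [(volume : Measure V).IsAddHaarMeasure]

lemma conv_bound (i : ℕ) : ∀ {E₁ F₁ F : Type} [NormedAddCommGroup E₁] [NormedSpace ℝ E₁]
    [NormedAddCommGroup F₁] [NormedSpace ℝ F₁] [NormedAddCommGroup F] [NormedSpace ℝ F]
    (L : E₁ →L[ℝ] F₁ →L[ℝ] F) (f : V → E₁) (g : V → F₁)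
    (_ : ContDiff ℝ (⊤ : ℕ∞) f) (_ : ∀ x, 1 < ‖x‖ → f x = 0)
    (_ : LocallyIntegrable g volume) (w : V) (S : ℝ) (_ : ∀ y, ‖y - w‖ ≤ 1 → ‖g y‖ ≤ S),
    ‖iteratedFDeriv ℝ i (f ⋆[L, volume] g) w‖ ≤ ‖L‖ * (∫ x, ‖iteratedFDeriv ℝ i f x‖) * S := by
  have hcs : ∀ {E₁ : Type} [NormedAddCommGroup E₁] {f : V → E₁} (_ : ∀ x, 1 < ‖x‖ → f x = 0),
      HasCompactSupport f := by
    intro E₁ _ f hf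
    refine HasCompactSupport.of_support_subset_isCompact (isCompact_closedBall (0:V) 1) ?_
    intro x hx
    by_contra h
    apply hx
    apply hf
    simpa using h
  have h0 : ∀ {E₁ : Type} [NormedAddCommGroup E₁] {f : V → E₁} (_ : ∀ x, 1 < ‖x‖ → f x = 0)
      (x : V), 1 < ‖x‖ → f =ᶠ[nhds x] fun _ => 0 := by
    intro E₁ _ f hf x hx
    filter_upwards [(isOpen_lt continuous_const continuous_norm).mem_nhds hx] with y hy
    exact hf y hy
  induction i with
  | zero =>
    intro E₁ F₁ F _ _ _ _ _ _ L f g hf hs hg w S hS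
    simp only [norm_iteratedFDeriv_zero]
    have hint : Integrable (fun x => ‖f x‖) volume :=
      (hf.continuous.integrable_of_hasCompactSupport (hcs hs)).norm
    have hSn : 0 ≤ S := (norm_nonneg _).trans (hS w (by simp))
    calc ‖(f ⋆[L, volume] g) w‖ ≤ ∫ x, ‖L‖ * S * ‖f x‖ := by
          refine norm_integral_le_of_norm_le (hint.const_mul _) (Filter.Eventually.of_forall ?_)
          intro t
          by_cases ht : 1 < ‖t‖
          · simp [hs t ht]
          · have := hS (w - t) (by simpa using ht)
            calc _ ≤ ‖L‖ * ‖f t‖ * ‖g (w - t)‖ := L.le_opNorm₂ _ _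
              _ ≤ ‖L‖ * ‖f t‖ * S := by gcongr
              _ = _ := by ring
      _ = _ := by rw [integral_const_mul]; ring
  | succ i ih =>
    intro E₁ F₁ F _ _ _ _ _ _ L f g hf hs hg w S hS
    have hSn : 0 ≤ S := (norm_nonneg _).trans (hS w (by simp))
    rw [← norm_iteratedFDeriv_fderiv]
    have e : fderiv ℝ (f ⋆[L, volume] g) = (fderiv ℝ f ⋆[L.precompL V, volume] g) := by
      funext x
      exact ((hcs hs).hasFDerivAt_convolution_left L (hf.of_le (by exact_mod_cast le_top)) hg x).fderiv
    rw [e]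
    refine (ih (L.precompL V) (fderiv ℝ f) g
      (hf.fderiv_right (m := (⊤ : ℕ∞)) (by exact_mod_cast le_top)) ?_ hg w S hS).trans ?_
    · intro x hx
      have := (h0 hs x hx).fderiv_eq (𝕜 := ℝ)
      rw [this]; simp
    · simp only [norm_iteratedFDeriv_fderiv]
      have := L.norm_precompL_le V
      gcongr

variable {F : Type} [NormedAddCommGroup F] [NormedSpace ℝ F]
  {R : V → ℝ} {P : V →L[ℝ] V} {g : V → F}

lemma KerHyp.cs (hR : KerHyp R) : HasCompactSupport R := by
  refine HasCompactSupport.of_support_subset_isCompact (isCompact_closedBall (0:V) 1) ?_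
  intro x hx
  by_contra h
  apply hx
  apply hR.supp
  simpa using h

lemma KerHyp.integrable (hR : KerHyp R) : Integrable R volume :=
  hR.smooth.continuous.integrable_of_hasCompactSupport hR.cs

lemma KerHyp.avg_bound (hR : KerHyp R) {f : V → F} {c : ℝ} (h : ∀ z, ‖z‖ ≤ 1 → ‖f z‖ ≤ c) :
    ‖∫ z, R z • f z‖ ≤ c := by
  calc _ ≤ ∫ z, R z * c := by
        refine norm_integral_le_of_norm_le (hR.integrable.mul_const c)
          (Filter.Eventually.of_forall ?_)
        intro z
        rw [norm_smul, Real.norm_of_nonneg (hR.nonneg z)]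
        by_cases hz : ‖z‖ ≤ 1
        · exact mul_le_mul_of_nonneg_left (h z hz) (hR.nonneg z)
        · rw [hR.supp z (by simpa using hz)]; simp
    _ = c := by rw [integral_mul_const, hR.int_one, one_mul]

lemma KerHyp.int_smul (hR : KerHyp R) {f : V → F} (hf : StronglyMeasurable f) {S : ℝ}
    (hS : ∀ x, ‖f x‖ ≤ S) : Integrable (fun z => R z • f z) volume := by
  refine (hR.integrable.mul_const S).mono'
    (hR.smooth.continuous.stronglyMeasurable.smul hf).aestronglyMeasurable
    (Filter.Eventually.of_forall fun z => ?_)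
  rw [norm_smul, Real.norm_of_nonneg (hR.nonneg z)]
  exact mul_le_mul_of_nonneg_left (hS z) (hR.nonneg z)

lemma sm_comp (hg : StronglyMeasurable g) (p : V) :
    StronglyMeasurable (fun z => g (p - P z)) :=
  hg.comp_measurable (by fun_prop : Continuous fun z => p - P z).measurable

lemma KerHyp.int_T (hR : KerHyp R) (hg : StronglyMeasurable g) {S : ℝ}
    (hS : ∀ x, ‖g x‖ ≤ S) (p : V) : Integrable (fun z => R z • g (p - P z)) volume :=
  hR.int_smul (sm_comp hg p) (fun _ => hS _)

lemma KerHyp.T_bound (hR : KerHyp R) {S : ℝ} (hS : ∀ x, ‖g x‖ ≤ S) (p : V) :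
    ‖avgT R P g p‖ ≤ S := hR.avg_bound fun _ _ => hS _

lemma KerHyp.T_lip (hR : KerHyp R) (hg : StronglyMeasurable g) {S L : ℝ}
    (hS : ∀ x, ‖g x‖ ≤ S) (hL : ∀ x y, ‖g x - g y‖ ≤ L * ‖x - y‖) (x y : V) :
    ‖avgT R P g x - avgT R P g y‖ ≤ L * ‖x - y‖ := by
  unfold avgT
  rw [← integral_sub (hR.int_T hg hS x) (hR.int_T hg hS y)]
  simp only [← smul_sub]
  refine hR.avg_bound fun z _ => (hL _ _).trans (le_of_eq ?_)
  congr 2; abel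

lemma KerHyp.int_const [CompleteSpace F] (hR : KerHyp R) (c : F) : ∫ z, R z • c = c := by
  rw [integral_smul_const, hR.int_one, one_smul]

lemma KerHyp.T_sub_const [CompleteSpace F] (hR : KerHyp R) (hg : StronglyMeasurable g) {S : ℝ}
    (hS : ∀ x, ‖g x‖ ≤ S) (p : V) (c : F) :
    avgT R P (fun x => g x - c) p = avgT R P g p - c := by
  unfold avgT
  conv_rhs => rw [← hR.int_const c]
  rw [← integral_sub (hR.int_T hg hS p) (hR.integrable.smul_const c)]
  simp only [smul_sub]

lemma P_le {P : V →L[ℝ] V} {r : ℝ} (hP : ‖P‖ ≤ r) {z : V} (hz : ‖z‖ ≤ 1) : ‖P z‖ ≤ r := by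
  calc _ ≤ ‖P‖ * ‖z‖ := P.le_opNorm z
    _ ≤ ‖P‖ * 1 := by gcongr
    _ ≤ r := by linarith

lemma KerHyp.T_close1 [CompleteSpace F] (hR : KerHyp R) (hg : StronglyMeasurable g) {S L r : ℝ}
    (hL0 : 0 ≤ L) (hP : ‖P‖ ≤ r)
    (hS : ∀ x, ‖g x‖ ≤ S) (hL : ∀ x y, ‖g x - g y‖ ≤ L * ‖x - y‖) (p : V) :
    ‖avgT R P g p - g p‖ ≤ L * r := by
  rw [← hR.T_sub_const hg hS]
  refine hR.avg_bound fun z hz => (hL _ _).trans ?_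
  rw [sub_sub_cancel_left, norm_neg]
  have := P_le hP hz
  gcongr

lemma KerHyp.int_odd [CompleteSpace F] (hR : KerHyp R) (A : V →L[ℝ] F) :
    ∫ z, R z • A z = 0 := by
  have h := integral_neg_eq_self (μ := (volume : Measure V)) (fun z => R z • A z)
  simp only [hR.even, map_neg, smul_neg, integral_neg] at h
  have h2 : (2:ℝ) • (∫ z, R z • A z) = 0 := by
    rw [two_smul]; nth_rewrite 1 [← h]; simp
  simpa using h2

lemma KerHyp.T_close2 [CompleteSpace F] (hR : KerHyp R) (hg : StronglyMeasurable g) {S L r : ℝ}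
    (hL0 : 0 ≤ L) (hP : ‖P‖ ≤ r) (hgd : Differentiable ℝ g)
    (hS : ∀ x, ‖g x‖ ≤ S) (hL : ∀ x y, ‖fderiv ℝ g x - fderiv ℝ g y‖ ≤ L * ‖x - y‖) (p : V) :
    ‖avgT R P g p - g p‖ ≤ L * r ^ 2 := by
  have hr : 0 ≤ r := (norm_nonneg _).trans hP
  have hi : Integrable (fun z => R z • (fderiv ℝ g p ∘L P) z) volume := by
    refine (hR.smooth.continuous.smul
      (fderiv ℝ g p ∘L P).continuous).integrable_of_hasCompactSupport ?_
    exact hR.cs.smul_right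
  have e : avgT R P g p - g p
      = ∫ z, R z • (g (p - P z) - g p - (fderiv ℝ g p) ((p - P z) - p)) := by
    rw [← hR.T_sub_const hg hS, ← add_zero (avgT R P (fun x => g x - g p) p),
      ← hR.int_odd (fderiv ℝ g p ∘L P)]
    unfold avgT
    rw [← integral_add _ hi]
    · congr 1; funext z
      rw [← smul_add]; congr 1
      rw [sub_sub_cancel_left, map_neg, sub_neg_eq_add]; rfl
    · simp only [smul_sub]
      exact (hR.int_T hg hS p).sub (hR.integrable.smul_const _)
  rw [e]
  refine hR.avg_bound fun z hz => ?_
  have hPz := P_le hP hz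
  have hn : ‖p - P z - p‖ ≤ r := by rwa [sub_sub_cancel_left, norm_neg]
  have := (convex_closedBall p r).norm_image_sub_le_of_norm_fderiv_le' (𝕜 := ℝ) (f := g)
    (C := L * r) (φ := fderiv ℝ g p) (x := p) (y := p - P z) (fun x _ => hgd x)
    (fun x hx => (hL _ _).trans (by
      rw [mem_closedBall_iff_norm] at hx; gcongr)) (Metric.mem_closedBall_self hr)
    (by rw [mem_closedBall_iff_norm]; exact hn)
  refine this.trans ?_
  rw [pow_two, ← mul_assoc]
  gcongr

lemma KerHyp.T_deriv [CompleteSpace F] (hR : KerHyp R) (hg : ContDiff ℝ 1 g) {S S' : ℝ}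
    (hS : ∀ x, ‖g x‖ ≤ S) (hS' : ∀ x, ‖fderiv ℝ g x‖ ≤ S') (p : V) :
    HasFDerivAt (avgT R P g) (avgT R P (fderiv ℝ g) p) p := by
  have hc : Continuous (fderiv ℝ g) := hg.continuous_fderiv (by norm_num)
  refine hasFDerivAt_integral_of_dominated_of_fderiv_le (𝕜 := ℝ) (bound := fun z => R z * S')
    (F' := fun p z => R z • fderiv ℝ g (p - P z)) (s := Set.univ)
    Filter.univ_mem ?_ ?_ ?_ ?_ ?_ ?_
  · exact Filter.Eventually.of_forall fun x =>
      (hR.int_T hg.continuous.stronglyMeasurable hS x).aestronglyMeasurable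
  · exact hR.int_T hg.continuous.stronglyMeasurable hS p
  · exact (hR.int_T hc.stronglyMeasurable hS' p).aestronglyMeasurable
  · refine Filter.Eventually.of_forall fun z x _ => ?_
    rw [norm_smul, Real.norm_of_nonneg (hR.nonneg z)]
    exact mul_le_mul_of_nonneg_left (hS' _) (hR.nonneg z)
  · exact hR.integrable.mul_const _
  · refine Filter.Eventually.of_forall fun z x _ => ?_
    have h1 : HasFDerivAt g (fderiv ℝ g (x - P z)) (x - P z) :=
      (hg.differentiable (by norm_num) _).hasFDerivAt
    have h2 := h1.comp x ((hasFDerivAt_id x).sub_const (P z))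
    exact h2.const_smul (R z)

lemma KerHyp.T_taylor (hR : KerHyp R) {G : V → ℝ} {A : ℝ} {m : ℕ} (hG : ContDiff ℝ m G)
    (hb : ∀ j ≤ m, ∀ x, ‖iteratedFDeriv ℝ j G x‖ ≤ A)
    (hl : ∀ x y, ‖iteratedFDeriv ℝ m G x - iteratedFDeriv ℝ m G y‖ ≤ A * ‖x - y‖) :
    HasFTaylorSeriesUpTo m (avgT R P G) (fun p j => avgT R P (iteratedFDeriv ℝ j G) p) := by
  have hcont : ∀ j ≤ m, Continuous (iteratedFDeriv ℝ j G) := fun j hj =>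
    hG.continuous_iteratedFDeriv (by exact_mod_cast hj)
  refine ⟨?_, ?_, ?_⟩
  · intro x
    have h := (continuousMultilinearCurryFin0 ℝ V ℝ).toContinuousLinearEquiv.integral_comp_comm
      (μ := (volume : Measure V)) (fun z => R z • iteratedFDeriv ℝ 0 G (x - P z))
    change (continuousMultilinearCurryFin0 ℝ V ℝ).toContinuousLinearEquiv
      (∫ z, R z • iteratedFDeriv ℝ 0 G (x - P z)) = _
    rw [← h]
    unfold avgT
    congr 1
  · intro j hj x
    have hj' : j < m := by exact_mod_cast hj
    have h1 := hR.T_deriv (P := P) (g := iteratedFDeriv ℝ j G)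
      (hG.iteratedFDeriv_right (m := 1) (i := j) (by exact_mod_cast (by omega : 1 + j ≤ m)))
      (hb j hj'.le)
      (fun x => by rw [norm_fderiv_iteratedFDeriv]; exact hb (j+1) hj' x) x
    let L : (ContinuousMultilinearMap ℝ (fun _ : Fin (j+1) => V) ℝ) ≃ₗᵢ[ℝ]
        (V →L[ℝ] ContinuousMultilinearMap ℝ (fun _ : Fin j => V) ℝ) :=
      continuousMultilinearCurryLeftEquiv ℝ (fun _ : Fin (j+1) => V) ℝ
    have h := ContinuousLinearEquiv.integral_comp_comm (𝕜 := ℝ)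
      (F := V →L[ℝ] ContinuousMultilinearMap ℝ (fun _ : Fin j => V) ℝ)
      L.toContinuousLinearEquiv
      (μ := (volume : Measure V)) (fun z => R z • iteratedFDeriv ℝ (j+1) G (x - P z))
    have e : avgT R P (fderiv ℝ (iteratedFDeriv ℝ j G)) x
        = ContinuousMultilinearMap.curryLeft (avgT R P (iteratedFDeriv ℝ (j+1) G) x) := by
      refine Eq.trans ?_ h
      unfold avgT
      congr 1
    rw [← e]
    exact h1
  · intro j hj
    have hj' : j ≤ m := by exact_mod_cast hj
    have hA : 0 ≤ A := (norm_nonneg _).trans (hb 0 (Nat.zero_le _) 0)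
    exact (lip_of_bound hA (hR.T_lip (P := P) (hcont j hj').stronglyMeasurable (hb j hj')
      (iter_lip_le hG hb hl hj'))).continuous

lemma T_eq_conv (M : V →L[ℝ] V) (hPM : ∀ p, P (M p) = p) (g : V → F) :
    avgT R P g = (R ⋆[ContinuousLinearMap.lsmul ℝ ℝ, volume] (fun w => g (P w))) ∘ M := by
  funext p
  simp [avgT, convolution, hPM]

lemma loc_int (hg : StronglyMeasurable g) {S : ℝ} (hS : ∀ x, ‖g x‖ ≤ S) :
    LocallyIntegrable (fun w => g (P w)) volume := by
  refine (locallyIntegrable_const (μ := (volume : Measure V)) S).mono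
    (hg.comp_measurable P.continuous.measurable).aestronglyMeasurable
    (Filter.Eventually.of_forall fun x => (hS _).trans (le_abs_self _))

lemma KerHyp.T_smooth [CompleteSpace F] (hR : KerHyp R) (M : V →L[ℝ] V) (hPM : ∀ p, P (M p) = p)
    (hg : StronglyMeasurable g) {S : ℝ} (hS : ∀ x, ‖g x‖ ≤ S) :
    ContDiff ℝ (⊤ : ℕ∞) (avgT R P g) := by
  rw [T_eq_conv M hPM]
  exact (hR.cs.contDiff_convolution_left (n := ⊤) (ContinuousLinearMap.lsmul ℝ ℝ) hR.smooth
    (loc_int hg hS)).comp M.contDiff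

lemma KerHyp.T_iter_bound [CompleteSpace F] (hR : KerHyp R) (M : V →L[ℝ] V)
    (hPM : ∀ p, P (M p) = p) {r : ℝ} (hP : ‖P‖ ≤ r)
    (hg : StronglyMeasurable g) {S : ℝ} (hS : ∀ x, ‖g x‖ ≤ S) (p : V) {s : ℝ}
    (hs : ∀ y, ‖y - p‖ ≤ r → ‖g y‖ ≤ s) (i : ℕ) :
    ‖iteratedFDeriv ℝ i (avgT R P g) p‖ ≤ (∫ x, ‖iteratedFDeriv ℝ i R x‖) * s * ‖M‖ ^ i := by
  have hsm := (hR.cs.contDiff_convolution_left (n := ⊤) (ContinuousLinearMap.lsmul ℝ ℝ) hR.smooth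
    (loc_int (P := P) hg hS))
  rw [T_eq_conv M hPM, M.iteratedFDeriv_comp_right hsm p (i := i) (by exact_mod_cast le_top)]
  refine (ContinuousMultilinearMap.norm_compContinuousLinearMap_le _ _).trans ?_
  simp only [Finset.prod_const, Finset.card_univ, Fintype.card_fin]
  gcongr
  refine (conv_bound i (ContinuousLinearMap.lsmul ℝ ℝ) R _ hR.smooth hR.supp (loc_int hg hS)
    (M p) s ?_).trans ?_
  · intro y hy
    apply hs
    have := P_le hP hy
    rwa [map_sub, hPM] at this
  · have h1 : ‖(ContinuousLinearMap.lsmul ℝ ℝ : ℝ →L[ℝ] F →L[ℝ] F)‖ ≤ 1 :=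
      ContinuousLinearMap.opNorm_lsmul_le
    have hs0 : 0 ≤ s := (norm_nonneg _).trans (hs p (by simpa using (norm_nonneg _).trans hP))
    have h2 : 0 ≤ ∫ x, ‖iteratedFDeriv ℝ i R x‖ := integral_nonneg fun _ => norm_nonneg _
    calc _ ≤ 1 * (∫ x, ‖iteratedFDeriv ℝ i R x‖) * s := by gcongr
      _ = _ := by ring

end Conv

section Wlem

variable {V : Type} [NormedAddCommGroup V] [NormedSpace ℝ V] [MeasurableSpace V]

lemma W_nonneg {k : ℕ} {A : ℝ} {ψ : V → ℝ} (h : WBound k A ψ) : 0 ≤ A := by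
  rcases k with _ | m
  · exact (abs_nonneg _).trans (h.2 0)
  · exact (norm_nonneg _).trans (h.2.1 0 (Nat.zero_le _) 0)

lemma W_mono {k : ℕ} {A B : ℝ} {ψ : V → ℝ} (h : WBound k A ψ) (hAB : A ≤ B) : WBound k B ψ := by
  rcases k with _ | m
  · exact ⟨h.1, fun x => (h.2 x).trans hAB⟩
  · exact ⟨h.1, fun j hj x => (h.2.1 j hj x).trans hAB,
      h.2.2.weaken (Real.toNNReal_le_toNNReal hAB)⟩

lemma W_lip {m : ℕ} {A : ℝ} {ψ : V → ℝ} (h : WBound (m+1) A ψ) (x y : V) :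
    ‖iteratedFDeriv ℝ m ψ x - iteratedFDeriv ℝ m ψ y‖ ≤ A * ‖x - y‖ :=
  bound_of_lip (W_nonneg h) h.2.2 x y

lemma W_succ {m : ℕ} {A : ℝ} {ψ : V → ℝ} (h : ContDiff ℝ m ψ)
    (hb : ∀ j ≤ m, ∀ x, ‖iteratedFDeriv ℝ j ψ x‖ ≤ A)
    (hl : ∀ x y, ‖iteratedFDeriv ℝ m ψ x - iteratedFDeriv ℝ m ψ y‖ ≤ A * ‖x - y‖) :
    WBound (m+1) A ψ :=
  ⟨h, hb, lip_of_bound ((norm_nonneg _).trans (hb 0 (Nat.zero_le _) 0)) hl⟩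

lemma W_of_CD [BorelSpace V] {l : ℕ} {A : ℝ} {ψ : V → ℝ} (h : ContDiff ℝ l ψ)
    (hb : ∀ j ≤ l, ∀ x, ‖iteratedFDeriv ℝ j ψ x‖ ≤ A) : WBound l A ψ := by
  rcases l with _ | m
  · refine ⟨h.continuous.measurable, fun x => ?_⟩
    simpa using hb 0 le_rfl x
  · refine W_succ (h.of_le (by exact_mod_cast Nat.le_succ m)) (fun j hj => hb j (by omega)) ?_
    intro x y
    exact iter_mvt h (Nat.lt_succ_self m) convex_univ (fun z _ => hb _ le_rfl z)
      (Set.mem_univ _) (Set.mem_univ _)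

lemma W_add {k : ℕ} {A B : ℝ} {f g : V → ℝ} (hf : WBound k A f) (hg : WBound k B g) :
    WBound k (A + B) (fun x => f x + g x) := by
  rcases k with _ | m
  · exact ⟨hf.1.add hg.1, fun x => (abs_add_le _ _).trans (add_le_add (hf.2 x) (hg.2 x))⟩
  · have e : ∀ j ≤ m, iteratedFDeriv ℝ j (fun x => f x + g x) =
      fun x => iteratedFDeriv ℝ j f x + iteratedFDeriv ℝ j g x := fun j hj =>
      iter_add (hf.1.of_le (by exact_mod_cast hj)) (hg.1.of_le (by exact_mod_cast hj))
    refine W_succ (hf.1.add hg.1) ?_ ?_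
    · intro j hj x
      rw [e j hj]
      exact (norm_add_le _ _).trans (add_le_add (hf.2.1 j hj x) (hg.2.1 j hj x))
    · intro x y
      rw [e m le_rfl]
      simp only
      rw [add_sub_add_comm, add_mul]
      exact (norm_add_le _ _).trans (add_le_add (W_lip hf x y) (W_lip hg x y))

lemma W_sub {k : ℕ} {A B : ℝ} {f g : V → ℝ} (hf : WBound k A f) (hg : WBound k B g) :
    WBound k (A + B) (fun x => f x - g x) := by
  rcases k with _ | m
  · exact ⟨hf.1.sub hg.1, fun x => (abs_sub _ _).trans (add_le_add (hf.2 x) (hg.2 x))⟩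
  · have e : ∀ j ≤ m, iteratedFDeriv ℝ j (fun x => f x - g x) =
      fun x => iteratedFDeriv ℝ j f x - iteratedFDeriv ℝ j g x := fun j hj =>
      iter_sub (hf.1.of_le (by exact_mod_cast hj)) (hg.1.of_le (by exact_mod_cast hj))
    refine W_succ (hf.1.sub hg.1) ?_ ?_
    · intro j hj x
      rw [e j hj]
      exact (norm_sub_le _ _).trans (add_le_add (hf.2.1 j hj x) (hg.2.1 j hj x))
    · intro x y
      rw [e m le_rfl]
      simp only
      rw [sub_sub_sub_comm, add_mul]
      exact (norm_sub_le _ _).trans (add_le_add (W_lip hf x y) (W_lip hg x y))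

/-- Bounds for the cut-off part near the boundary. -/
lemma H_W [BorelSpace V] {χ Φ : V → ℝ} {η A B : ℝ} {S : Set V} {m : ℕ}
    (hη : 0 < η) (hη1 : η < 1) (hB : 0 ≤ B) (hm : m ≤ 2)
    (hχ : ContDiff ℝ (⊤ : ℕ∞) χ)
    (hχb : ∀ j ≤ 3, ∀ p, ‖iteratedFDeriv ℝ j χ p‖ ≤ B * (η ^ j)⁻¹)
    (hS : ∀ p ∉ S, ∀ j, iteratedFDeriv ℝ j χ p = 0)
    (hΦ : WBound (m+1) A Φ)
    (hSq : ∀ p ∈ S, ∃ q, ‖p - q‖ ≤ 4 * η ∧ ∀ j ≤ m, iteratedFDeriv ℝ j Φ q = 0)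
    {l : ℕ} (hl : l ≤ m + 1) :
    WBound l (1000 * B * A * η ^ (m + 1 - l)) (fun x => χ x * Φ x) := by
  have hA := W_nonneg hΦ
  have hχm : ContDiff ℝ m χ := hχ.of_le (by exact_mod_cast le_top)
  have hc : ContDiff ℝ m (fun x => χ x * Φ x) := hχm.mul hΦ.1
  have hbd : ∀ l' ≤ m + 1, ∀ j ≤ m, j ≤ l' → ∀ p, ‖iteratedFDeriv ℝ j (fun x => χ x * Φ x) p‖ ≤
      1000 * B * A * η ^ (m + 1 - l') := by
    intro l' hl' j hj hjl p
    refine (prod_iter hη hA hB hm hχ hχb hS hΦ.1 (W_lip hΦ) hSq hj p).trans ?_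
    have h1 : η ^ (m + 1 - j) ≤ η ^ (m + 1 - l') :=
      pow_le_pow_of_le_one hη.le hη1.le (by omega)
    have h2 : 0 ≤ B * A := by positivity
    have h3 : 0 ≤ η ^ (m + 1 - j) := by positivity
    nlinarith [mul_le_mul_of_nonneg_left h1 h2, mul_nonneg h2 h3]
  rcases hl.eq_or_lt with rfl | h
  · refine W_succ hc (fun j hj p => hbd (m+1) le_rfl j hj (by omega) p) ?_
    simpa using prod_lip hη hA hB hm hχ hχb hS hΦ.1 (W_lip hΦ) hSq
  · exact W_of_CD (hc.of_le (by exact_mod_cast (by omega : l ≤ m)))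
      (fun j hj p => hbd l hl j (by omega) hj p)

end Wlem

section TW

variable {V : Type} [NormedAddCommGroup V] [NormedSpace ℝ V] [FiniteDimensional ℝ V]
  [SecondCountableTopology V] [MeasureSpace V] [BorelSpace V]
  [(volume : Measure V).IsAddHaarMeasure] {R : V → ℝ} {P M : V →L[ℝ] V} {η K A : ℝ} {G : V → ℝ}

lemma W_sm {k : ℕ} (hG : WBound k A G) : StronglyMeasurable G := by
  rcases k with _ | m
  · exact hG.1.stronglyMeasurable
  · exact hG.1.continuous.stronglyMeasurable

lemma W_bd {k : ℕ} (hG : WBound k A G) (x : V) : ‖G x‖ ≤ A := by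
  rcases k with _ | m
  · exact hG.2 x
  · simpa using hG.2.1 0 (Nat.zero_le _) x

lemma T_iter_eq (hR : KerHyp R) {m : ℕ} (hG : WBound (m+1) A G) {j : ℕ} (hj : j ≤ m) (p : V) :
    iteratedFDeriv ℝ j (avgT R P G) p = avgT R P (iteratedFDeriv ℝ j G) p :=
  ((hR.T_taylor (P := P) hG.1 hG.2.1 (W_lip hG)).eq_iteratedFDeriv (by exact_mod_cast hj) p).symm

lemma pow_inv_mono (hη : 0 < η) (hη1 : η < 1) {a b : ℕ} (h : a ≤ b) : (η ^ a)⁻¹ ≤ (η ^ b)⁻¹ :=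
  inv_anti₀ (by positivity) (pow_le_pow_of_le_one hη.le hη1.le h)

lemma TJ2 (hη : 0 < η) (hη1 : η < 1) (hR : KerHyp R) (hPM : ∀ p, P (M p) = p)
    (hP : ‖P‖ ≤ 2 * η) (hM : ‖M‖ ≤ η⁻¹) (hK : ∀ i ≤ 3, ∫ x, ‖iteratedFDeriv ℝ i R x‖ ≤ K)
    {k l : ℕ} (hkl : k ≤ l) (hl : l ≤ 3) (hG : WBound k A G) :
    WBound l ((1 + 2 * K) * (η ^ (l - k))⁻¹ * A) (avgT R P G) := by
  have hA := W_nonneg hG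
  have hK0 : 0 ≤ K := (integral_nonneg fun _ => norm_nonneg _).trans (hK 0 (by norm_num))
  have hsm := hR.T_smooth M hPM (W_sm hG) (W_bd hG)
  refine W_of_CD (hsm.of_le (by exact_mod_cast le_top)) ?_
  have key : ∀ {F : Type} [NormedAddCommGroup F] [NormedSpace ℝ F] [CompleteSpace F] (g : V → F)
      (S s : ℝ) (p : V) (i : ℕ), i ≤ 3 → StronglyMeasurable g → (∀ x, ‖g x‖ ≤ S) → 0 ≤ s →
      (∀ y, ‖y - p‖ ≤ 2 * η → ‖g y‖ ≤ s) →
      ‖iteratedFDeriv ℝ i (avgT R P g) p‖ ≤ K * s * (η ^ i)⁻¹ := by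
    intro F _ _ _ g S s p i hi hg hS hs0 hs
    refine (hR.T_iter_bound M hPM hP hg hS p hs i).trans ?_
    have h1 := hK i hi
    have h2 : ‖M‖ ^ i ≤ (η ^ i)⁻¹ := by
      rw [← inv_pow]; gcongr
    have : 0 ≤ ∫ x, ‖iteratedFDeriv ℝ i R x‖ := integral_nonneg fun _ => norm_nonneg _
    gcongr
  intro j hj p
  rcases k with _ | m
  · refine (key G A A p j (by omega) (W_sm hG) (W_bd hG) hA (fun y _ => W_bd hG y)).trans ?_
    have := pow_inv_mono hη hη1 (show j ≤ l - 0 by omega)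
    calc K * A * (η ^ j)⁻¹ = K * (η ^ j)⁻¹ * A := by ring
      _ ≤ (1 + 2 * K) * (η ^ (l-0))⁻¹ * A := by
        gcongr; linarith
  · by_cases hjm : j ≤ m
    · rw [T_iter_eq hR hG hjm]
      refine (hR.T_bound (hG.2.1 j hjm) p).trans ?_
      have h1 : 1 ≤ (η ^ (l - (m+1)))⁻¹ := by
        simpa using pow_inv_mono hη hη1 (Nat.zero_le (l - (m+1)))
      have h2 : 1 ≤ 1 + 2 * K := by linarith
      calc A = 1 * 1 * A := by ring
        _ ≤ _ := by gcongr
    · obtain ⟨i, rfl⟩ : ∃ i, j = m + (i + 1) := ⟨j - m - 1, by omega⟩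
      rw [← norm_iter_iter]
      have e : iteratedFDeriv ℝ m (avgT R P G) = avgT R P (iteratedFDeriv ℝ m G) := by
        funext x; exact T_iter_eq hR hG le_rfl x
      rw [e]
      set h := iteratedFDeriv ℝ m G with hh
      have hhc : Continuous h := hG.1.continuous_iteratedFDeriv le_rfl
      have hhb : ∀ x, ‖h x‖ ≤ A := hG.2.1 m le_rfl
      have e2 : avgT R P h = fun x => avgT R P (fun y => h y - h p) x + h p := by
        funext x
        rw [hR.T_sub_const hhc.stronglyMeasurable hhb]; abel
      have hsmh : StronglyMeasurable (fun y => h y - h p) :=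
        (hhc.sub continuous_const).stronglyMeasurable
      have hsb : ∀ y, ‖h y - h p‖ ≤ A + A := fun y =>
        (norm_sub_le _ _).trans (add_le_add (hhb _) (hhb _))
      have hTs := hR.T_smooth M hPM hsmh hsb
      have e3 : iteratedFDeriv ℝ (i+1) (avgT R P h) p
          = iteratedFDeriv ℝ (i+1) (avgT R P (fun y => h y - h p)) p := by
        rw [e2, iter_add (hTs.of_le (by exact_mod_cast le_top)) contDiff_const]
        simp [iteratedFDeriv_const_of_ne]
      rw [e3]
      refine (key (fun y => h y - h p) (A + A) (A * (2 * η)) p (i+1) (by omega) hsmh hsb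
        (by positivity) ?_).trans ?_
      · intro y hy
        refine (W_lip hG y p).trans ?_
        gcongr
      · have h1 := pow_inv_mono hη hη1 (show i ≤ l - (m+1) by omega)
        calc K * (A * (2 * η)) * (η ^ (i+1))⁻¹ = (2 * K) * (η ^ i)⁻¹ * A := by
              rw [pow_succ]; field_simp
          _ ≤ _ := by gcongr; linarith

lemma TJ3 (hη : 0 < η) (hR : KerHyp R) (hPM : ∀ p, P (M p) = p)
    (hP : ‖P‖ ≤ 2 * η)
    {k l : ℕ} (hkl : l ≤ k) (h2 : k - l ≤ 2) (hG : WBound k A G) :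
    WBound l (4 * η ^ (k - l) * A) (fun p => G p - avgT R P G p) := by
  have hA := W_nonneg hG
  have hsm := hR.T_smooth M hPM (W_sm hG) (W_bd hG)
  rcases k with _ | m
  · obtain rfl : l = 0 := by omega
    refine ⟨hG.1.sub hsm.continuous.measurable, fun x => ?_⟩
    refine (abs_sub _ _).trans ?_
    have h1 := W_bd hG x
    have h2 := hR.T_bound (P := P) (W_bd hG) x
    rw [Real.norm_eq_abs] at h1 h2
    simp only [Nat.sub_zero, pow_zero]
    linarith
  · have hTm : ContDiff ℝ m (avgT R P G) := hsm.of_le (by exact_mod_cast le_top)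
    have e : ∀ j ≤ m, iteratedFDeriv ℝ j (fun p => G p - avgT R P G p) =
        fun x => iteratedFDeriv ℝ j G x - avgT R P (iteratedFDeriv ℝ j G) x := by
      intro j hj
      rw [iter_sub (hG.1.of_le (by exact_mod_cast hj)) (hTm.of_le (by exact_mod_cast hj))]
      funext x
      rw [T_iter_eq hR hG hj]
    have hcont : ∀ j ≤ m, StronglyMeasurable (iteratedFDeriv ℝ j G) := fun j hj =>
      (hG.1.continuous_iteratedFDeriv (by exact_mod_cast hj)).stronglyMeasurable
    have hlip : ∀ j ≤ m, ∀ x y, ‖iteratedFDeriv ℝ j G x - iteratedFDeriv ℝ j G y‖ ≤ A * ‖x - y‖ :=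
      fun j hj => iter_lip_le hG.1 hG.2.1 (W_lip hG) hj
    have hc : ContDiff ℝ m (fun p => G p - avgT R P G p) := hG.1.sub hTm
    obtain rfl | rfl | hl : l = m + 1 ∨ l = m ∨ l + 1 = m := by omega
    · simp only [Nat.sub_self, pow_zero, mul_one]
      refine W_succ hc ?_ ?_
      · intro j hj x
        rw [e j hj]
        refine (norm_sub_le _ _).trans ?_
        have h1 := hG.2.1 j hj x
        have h2 := hR.T_bound (P := P) (hG.2.1 j hj) x
        linarith
      · intro x y
        rw [e m le_rfl]
        simp only
        rw [sub_sub_sub_comm]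
        refine (norm_sub_le _ _).trans ?_
        have h1 := W_lip hG x y
        have h2 := hR.T_lip (P := P) (hcont m le_rfl) (hG.2.1 m le_rfl) (W_lip hG) x y
        have : 0 ≤ A * ‖x - y‖ := by positivity
        linarith
    · refine W_of_CD hc fun j hj x => ?_
      rw [e j hj, norm_sub_rev]
      refine (hR.T_close1 (hcont j hj) hA hP (hG.2.1 j hj) (hlip j hj) x).trans ?_
      rw [Nat.add_sub_cancel_left, pow_one]
      nlinarith [mul_nonneg hA hη.le]
    · refine W_of_CD (hc.of_le (by exact_mod_cast (by omega : l ≤ m))) fun j hj x => ?_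
      rw [e j (by omega), norm_sub_rev]
      refine (hR.T_close2 (hcont j (by omega)) hA hP (iter_diff hG.1 (by omega))
        (hG.2.1 j (by omega)) ?_ x).trans ?_
      · intro x y
        have := hlip (j+1) (by omega) x y
        rw [iteratedFDeriv_succ_eq_comp_left] at this
        simp only [Function.comp_apply] at this
        rwa [← LinearIsometryEquiv.map_sub, LinearIsometryEquiv.norm_map] at this
      · have : m + 1 - l = 2 := by omega
        rw [this]
        nlinarith

end TW

section AbsJ

variable {V : Type} [NormedAddCommGroup V] [NormedSpace ℝ V] [FiniteDimensional ℝ V]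
  [SecondCountableTopology V] [MeasureSpace V] [BorelSpace V]
  [(volume : Measure V).IsAddHaarMeasure] {R : V → ℝ} {P M : V →L[ℝ] V} {η K A B : ℝ}
  {χ Φ : V → ℝ} {S : Set V}

lemma absH (hη : 0 < η) (hη1 : η < 1) (hB : 0 ≤ B)
    (hχ : ContDiff ℝ (⊤ : ℕ∞) χ)
    (hχb : ∀ j ≤ 3, ∀ p, ‖iteratedFDeriv ℝ j χ p‖ ≤ B * (η ^ j)⁻¹)
    (hS : ∀ p ∉ S, ∀ j, iteratedFDeriv ℝ j χ p = 0)
    (hχ1 : ∀ p, |χ p| ≤ 1)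
    (hSq : ∀ p ∈ S, ∃ q, ‖p - q‖ ≤ 4 * η ∧ Φ =ᶠ[nhds q] fun _ => 0)
    {k l : ℕ} (hk : k ≤ 3) (hl : l ≤ k) (hΦ : WBound k A Φ) :
    WBound l ((1 + 1000 * B) * η ^ (k - l) * A) (fun x => χ x * Φ x) := by
  have hA := W_nonneg hΦ
  rcases k with _ | m
  · obtain rfl : l = 0 := by omega
    refine ⟨hχ.continuous.measurable.mul hΦ.1, fun x => ?_⟩
    rw [abs_mul]
    have h1 := hΦ.2 x
    have h2 : 1 ≤ 1 + 1000 * B := by linarith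
    simp only [Nat.sub_zero, pow_zero, mul_one]
    calc _ ≤ 1 * A := by have := hχ1 x; gcongr
      _ ≤ _ := by gcongr
  · refine W_mono (H_W hη hη1 hB (by omega) hχ hχb hS hΦ ?_ hl) ?_
    · intro p hp
      obtain ⟨q, h1, h2⟩ := hSq p hp
      exact ⟨q, h1, fun j _ => iter_zero_of_eventually h2 j⟩
    · have : 0 ≤ A * η ^ (m + 1 - l) := by positivity
      nlinarith

lemma absG (hη : 0 < η) (hη1 : η < 1) (hB : 0 ≤ B)
    (hχ : ContDiff ℝ (⊤ : ℕ∞) χ)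
    (hχb : ∀ j ≤ 3, ∀ p, ‖iteratedFDeriv ℝ j χ p‖ ≤ B * (η ^ j)⁻¹)
    (hS : ∀ p ∉ S, ∀ j, iteratedFDeriv ℝ j χ p = 0)
    (hχ1 : ∀ p, |χ p| ≤ 1)
    (hSq : ∀ p ∈ S, ∃ q, ‖p - q‖ ≤ 4 * η ∧ Φ =ᶠ[nhds q] fun _ => 0)
    {k : ℕ} (hk : k ≤ 3) (hΦ : WBound k A Φ) :
    WBound k ((2 + 1000 * B) * A) (fun x => Φ x - χ x * Φ x) := by
  refine W_mono (W_sub hΦ (absH hη hη1 hB hχ hχb hS hχ1 hSq hk le_rfl hΦ)) (le_of_eq ?_)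
  simp; ring

lemma absJ2 (hη : 0 < η) (hη1 : η < 1) (hB : 0 ≤ B)
    (hχ : ContDiff ℝ (⊤ : ℕ∞) χ)
    (hχb : ∀ j ≤ 3, ∀ p, ‖iteratedFDeriv ℝ j χ p‖ ≤ B * (η ^ j)⁻¹)
    (hS : ∀ p ∉ S, ∀ j, iteratedFDeriv ℝ j χ p = 0)
    (hχ1 : ∀ p, |χ p| ≤ 1)
    (hSq : ∀ p ∈ S, ∃ q, ‖p - q‖ ≤ 4 * η ∧ Φ =ᶠ[nhds q] fun _ => 0)
    (hR : KerHyp R) (hPM : ∀ p, P (M p) = p)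
    (hP : ‖P‖ ≤ 2 * η) (hM : ‖M‖ ≤ η⁻¹) (hK : ∀ i ≤ 3, ∫ x, ‖iteratedFDeriv ℝ i R x‖ ≤ K)
    {k l : ℕ} (hkl : k ≤ l) (hl : l ≤ 3) (hΦ : WBound k A Φ) :
    WBound l (((1 + 2 * K) * (2 + 1000 * B)) * (η ^ (l - k))⁻¹ * A)
      (avgT R P (fun x => Φ x - χ x * Φ x)) := by
  refine W_mono (TJ2 hη hη1 hR hPM hP hM hK hkl hl
    (absG hη hη1 hB hχ hχb hS hχ1 hSq (by omega) hΦ)) (le_of_eq (by ring))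

lemma absJ3 (hη : 0 < η) (hη1 : η < 1) (hB : 0 ≤ B)
    (hχ : ContDiff ℝ (⊤ : ℕ∞) χ)
    (hχb : ∀ j ≤ 3, ∀ p, ‖iteratedFDeriv ℝ j χ p‖ ≤ B * (η ^ j)⁻¹)
    (hS : ∀ p ∉ S, ∀ j, iteratedFDeriv ℝ j χ p = 0)
    (hχ1 : ∀ p, |χ p| ≤ 1)
    (hSq : ∀ p ∈ S, ∃ q, ‖p - q‖ ≤ 4 * η ∧ Φ =ᶠ[nhds q] fun _ => 0)
    (hR : KerHyp R) (hPM : ∀ p, P (M p) = p)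
    (hP : ‖P‖ ≤ 2 * η)
    {k l : ℕ} (hkl : l ≤ k) (hk : k ≤ 3) (h2 : k - l ≤ 2) (hΦ : WBound k A Φ) :
    WBound l ((9 + 5000 * B) * η ^ (k - l) * A)
      (fun p => Φ p - avgT R P (fun x => Φ x - χ x * Φ x) p) := by
  have h := W_add (absH hη hη1 hB hχ hχb hS hχ1 hSq hk hkl hΦ)
    (TJ3 hη hR hPM hP hkl h2 (absG hη hη1 hB hχ hχb hS hχ1 hSq hk hΦ))
  have e : (fun p => Φ p - avgT R P (fun x => Φ x - χ x * Φ x) p) =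
    fun x => χ x * Φ x + ((Φ x - χ x * Φ x) - avgT R P (fun x => Φ x - χ x * Φ x) x) := by
    funext p; ring
  rw [e]
  exact W_mono h (le_of_eq (by ring))

end AbsJ

section Concrete

lemma ker_prod {E : Type} [NormedAddCommGroup E] [NormedSpace ℝ E] [MeasureSpace E]
    [SFinite (volume : Measure E)]
    {ρ : E → ℝ} (h : KerHyp ρ) : KerHyp (fun z : E × E => ρ z.1 * ρ z.2) where
  smooth := (h.smooth.comp contDiff_fst).mul (h.smooth.comp contDiff_snd)
  nonneg z := mul_nonneg (h.nonneg _) (h.nonneg _)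
  even z := by simp [h.even]
  supp z hz := by
    rw [Prod.norm_def, lt_max_iff] at hz
    rcases hz with hz | hz <;> simp [h.supp _ hz]
  int_one := by
    rw [Measure.volume_eq_prod, integral_prod_mul ρ ρ, h.int_one, one_mul]

variable {E : Type} [NormedAddCommGroup E] [NormedSpace ℝ E]

/-- The scaled change of variables. -/
noncomputable def opP (E : Type) [NormedAddCommGroup E] [NormedSpace ℝ E] (η : ℝ) :
    E × E →L[ℝ] E × E :=
  η • ((ContinuousLinearMap.fst ℝ E E + ContinuousLinearMap.snd ℝ E E).prod
    (ContinuousLinearMap.fst ℝ E E - ContinuousLinearMap.snd ℝ E E))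

/-- Half the difference. -/
noncomputable def opQ (E : Type) [NormedAddCommGroup E] [NormedSpace ℝ E] : E × E →L[ℝ] E :=
  (2:ℝ)⁻¹ • (ContinuousLinearMap.fst ℝ E E - ContinuousLinearMap.snd ℝ E E)

/-- The inverse change of variables. -/
noncomputable def opM (E : Type) [NormedAddCommGroup E] [NormedSpace ℝ E] (η : ℝ) :
    E × E →L[ℝ] E × E :=
  η⁻¹ • (((2:ℝ)⁻¹ • (ContinuousLinearMap.fst ℝ E E + ContinuousLinearMap.snd ℝ E E)).prod
    (opQ E))

lemma opP_apply (η : ℝ) (z : E × E) : opP E η z = (η • (z.1 + z.2), η • (z.1 - z.2)) := by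
  simp [opP]

lemma opQ_apply (z : E × E) : opQ E z = (2:ℝ)⁻¹ • (z.1 - z.2) := by
  simp [opQ]

lemma opM_apply (η : ℝ) (z : E × E) :
    opM E η z = (η⁻¹ • (2:ℝ)⁻¹ • (z.1 + z.2), η⁻¹ • (2:ℝ)⁻¹ • (z.1 - z.2)) := by
  simp [opM, opQ]

lemma opPM {η : ℝ} (hη : 0 < η) (p : E × E) : opP E η (opM E η p) = p := by
  rw [opM_apply, opP_apply]
  ext
  · simp only [smul_add, smul_sub, smul_smul]
    rw [mul_inv_cancel_left₀ hη.ne']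
    module
  · simp only [smul_add, smul_sub, smul_smul]
    rw [mul_inv_cancel_left₀ hη.ne']
    module

lemma opQ_norm : ‖opQ E‖ ≤ 1 := by
  refine ContinuousLinearMap.opNorm_le_bound _ zero_le_one fun z => ?_
  rw [opQ_apply, norm_smul]
  have h1 := norm_sub_le z.1 z.2
  have h2 := norm_fst_le z
  have h3 := norm_snd_le z
  norm_num
  linarith

lemma opP_norm {η : ℝ} (hη : 0 < η) : ‖opP E η‖ ≤ 2 * η := by
  refine ContinuousLinearMap.opNorm_le_bound _ (by positivity) fun z => ?_
  rw [opP_apply]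
  have h0 := norm_sub_le z.1 z.2
  have h1 := norm_add_le z.1 z.2
  have h2 := norm_fst_le z
  have h3 := norm_snd_le z
  rw [Prod.norm_def, max_le_iff]
  simp only [norm_smul, Real.norm_of_nonneg hη.le]
  constructor <;> nlinarith

lemma opM_norm {η : ℝ} (hη : 0 < η) : ‖opM E η‖ ≤ η⁻¹ := by
  have hi : 0 < η⁻¹ := by positivity
  refine ContinuousLinearMap.opNorm_le_bound _ hi.le fun z => ?_
  rw [opM_apply]
  have h0 := norm_sub_le z.1 z.2
  have h1 := norm_add_le z.1 z.2
  have h2 := norm_fst_le z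
  have h3 := norm_snd_le z
  rw [Prod.norm_def, max_le_iff]
  simp only [norm_smul, Real.norm_of_nonneg hi.le]
  norm_num
  constructor <;> apply mul_le_mul_of_nonneg_left _ hi.le <;> linarith

lemma opQP (η : ℝ) (z : E × E) : opQ E (opP E η z) = η • z.2 := by
  rw [opP_apply, opQ_apply]; simp only; module

/-- Points near the boundary are close to points where `Φ` vanishes locally. -/
lemma exists_q [Nontrivial E] {η : ℝ} (hη : 0 < η) {Φ : E × E → ℝ}
    (hΦ : ∀ p : E × E, ¬ ‖p.1 - p.2‖ ≤ 2 → Φ p = 0) {p : E × E}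
    (hp : 1 - 3 * η ≤ ‖opQ E p‖ ^ 2) :
    ∃ q, ‖p - q‖ ≤ 4 * η ∧ Φ =ᶠ[nhds q] fun _ => 0 := by
  have hloc : ∀ q : E × E, 1 < ‖opQ E q‖ → Φ =ᶠ[nhds q] fun _ => 0 := by
    intro q hq
    filter_upwards [(isOpen_lt continuous_const (opQ E).continuous.norm).mem_nhds hq] with y hy
    apply hΦ
    rw [opQ_apply, norm_smul] at hy
    norm_num at hy
    linarith
  by_cases h1 : 1 < ‖opQ E p‖
  · exact ⟨p, by simp; positivity, hloc p h1⟩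
  · push Not at h1
    obtain ⟨e, he1, he⟩ : ∃ e : E, ‖e‖ = 1 ∧ opQ E p = ‖opQ E p‖ • e := by
      by_cases h0 : opQ E p = 0
      · obtain ⟨e, he⟩ := exists_norm_eq E zero_le_one
        exact ⟨e, he, by simp [h0]⟩
      · refine ⟨‖opQ E p‖⁻¹ • opQ E p, norm_smul_inv_norm h0, ?_⟩
        rw [smul_smul, mul_inv_cancel₀ (norm_ne_zero_iff.2 h0), one_smul]
    refine ⟨p + (4 * η) • (e, -e), ?_, hloc _ ?_⟩
    · rw [sub_add_cancel_left, norm_neg, norm_smul, Prod.norm_def]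
      simp [he1, abs_of_pos hη]
    · have : opQ E (p + (4 * η) • (e, -e)) = (‖opQ E p‖ + 4 * η) • e := by
        rw [map_add, map_smul, add_smul, ← he]
        congr 1
        rw [opQ_apply]; simp only; module
      rw [this, norm_smul, he1, mul_one, Real.norm_of_nonneg (by positivity)]
      nlinarith [norm_nonneg (opQ E p)]

end Concrete

section Final

lemma cutoff {E : Type} [NormedAddCommGroup E] [InnerProductSpace ℝ E] [FiniteDimensional ℝ E]
    (C₀ : ℝ) (hC₀ : 0 < C₀) : ∃ B : ℝ, 0 ≤ B ∧ ∀ η : ℝ, 0 < η → η < 1 →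
      ∀ θ : ℝ → ℝ, ContDiff ℝ (⊤ : ℕ∞) θ → (∀ s, 0 ≤ θ s ∧ θ s ≤ 1) →
        (∀ s : ℝ, 1 - 2 * η ≤ |s| → θ s = 0) →
        (∀ j : ℕ, 1 ≤ j → j ≤ 3 → ∀ s, |iteratedDeriv j θ s| ≤ C₀ * (η ^ j)⁻¹) →
        ∀ j ≤ 3, ∀ p : E × E, ‖iteratedFDeriv ℝ j (fun p => 1 - θ (‖opQ E p‖ ^ 2)) p‖
          ≤ B * (η ^ j)⁻¹ := by
  have hN : ContDiff ℝ (⊤ : ℕ∞) (fun x : E => ‖x‖ ^ 2) := contDiff_norm_sq ℝ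
  have hK : ∃ K : ℝ, 1 ≤ K ∧ ∀ i ≤ 3, ∀ x : E, ‖x‖ ≤ 1 →
      ‖iteratedFDeriv ℝ i (fun x : E => ‖x‖ ^ 2) x‖ ≤ K := by
    have h : ∀ i : ℕ, ∃ K : ℝ, ∀ x ∈ Metric.closedBall (0:E) 1,
        ‖iteratedFDeriv ℝ i (fun x : E => ‖x‖ ^ 2) x‖ ≤ K := fun i =>
      (isCompact_closedBall (0:E) 1).exists_bound_of_continuousOn
        (hN.continuous_iteratedFDeriv (by exact_mod_cast le_top)).continuousOn
    choose K hK using h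
    refine ⟨1 + |K 0| + |K 1| + |K 2| + |K 3|, ?_, ?_⟩
    · have := abs_nonneg (K 0); have := abs_nonneg (K 1); have := abs_nonneg (K 2)
      have := abs_nonneg (K 3); linarith
    · intro i hi x hx
      refine (hK i x (by simpa using hx)).trans ?_
      have := abs_nonneg (K 0); have := abs_nonneg (K 1); have := abs_nonneg (K 2)
      have := abs_nonneg (K 3)
      have := le_abs_self (K i)
      interval_cases i <;> linarith
  obtain ⟨K, hK1, hK⟩ := hK
  refine ⟨1 + 6 * (1 + C₀) * K ^ 3, by positivity, ?_⟩
  intro η hη hη1 θ hθ hθ01 hθ0 hθb j hj p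
  have hg : ContDiff ℝ (⊤ : ℕ∞) (fun x : E => θ (‖x‖ ^ 2)) := hθ.comp hN
  have hgb : ∀ x : E, ‖iteratedFDeriv ℝ j (fun x : E => θ (‖x‖ ^ 2)) x‖
      ≤ 6 * (1 + C₀) * K ^ 3 * (η ^ j)⁻¹ := by
    intro x
    by_cases hx : ‖x‖ ≤ 1
    · have h := norm_iteratedFDeriv_comp_le (𝕜 := ℝ) (g := θ) (f := fun x : E => ‖x‖ ^ 2)
        (n := j) (N := (⊤ : ℕ∞)) (C := (1 + C₀) * (η ^ j)⁻¹) (D := K) hθ hN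
        (by exact_mod_cast le_top) x ?_ ?_
      · refine h.trans ?_
        have h6 : (Nat.factorial j : ℝ) ≤ 6 := by
          have : Nat.factorial j ≤ Nat.factorial 3 := Nat.factorial_le hj
          exact_mod_cast this
        have h7 : K ^ j ≤ K ^ 3 := pow_le_pow_right₀ hK1 hj
        calc _ ≤ 6 * ((1 + C₀) * (η ^ j)⁻¹) * K ^ 3 := by gcongr
          _ = _ := by ring
      · intro i hi
        rw [norm_iteratedFDeriv_eq_norm_iteratedDeriv, Real.norm_eq_abs]
        have h1 := pow_inv_mono hη hη1 hi
        have h2 : 1 ≤ (η ^ j)⁻¹ := by simpa using pow_inv_mono hη hη1 (Nat.zero_le j)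
        rcases Nat.eq_zero_or_pos i with rfl | hi0
        · rw [iteratedDeriv_zero, abs_of_nonneg (hθ01 _).1]
          have := (hθ01 (‖x‖ ^ 2)).2
          nlinarith
        · refine (hθb i hi0 (by omega) _).trans ?_
          gcongr
          linarith
      · intro i hi1 hi
        refine (hK i (by omega) x hx).trans ?_
        exact le_self_pow₀ hK1 (by omega)
    · push Not at hx
      rw [iter_zero_of_eventually]
      · simp; positivity
      · filter_upwards [(isOpen_lt continuous_const continuous_norm).mem_nhds hx] with y hy
        apply hθ0
        rw [abs_of_nonneg (by positivity)]
        nlinarith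
  have hgQ : ContDiff ℝ (⊤ : ℕ∞) (fun p : E × E => θ (‖opQ E p‖ ^ 2)) :=
    hg.comp (opQ E).contDiff
  rw [iter_sub contDiff_const (hgQ.of_le (by exact_mod_cast le_top))]
  refine (norm_sub_le _ _).trans ?_
  rw [add_mul]
  refine add_le_add ?_ ?_
  · have h2 : 1 ≤ (η ^ j)⁻¹ := by simpa using pow_inv_mono hη hη1 (Nat.zero_le j)
    rcases Nat.eq_zero_or_pos j with rfl | hj0
    · simp
    · rw [iteratedFDeriv_const_of_ne (by omega)]
      simp; positivity
  · have e := (opQ E).iteratedFDeriv_comp_right hg p (i := j) (by exact_mod_cast le_top)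
    have e' : (fun p : E × E => θ (‖opQ E p‖ ^ 2)) = (fun x : E => θ (‖x‖ ^ 2)) ∘ (opQ E) := rfl
    rw [e', e]
    refine (ContinuousMultilinearMap.norm_compContinuousLinearMap_le _ _).trans ?_
    simp only [Finset.prod_const, Finset.card_univ, Fintype.card_fin]
    have h1 : ‖opQ E‖ ^ j ≤ 1 := pow_le_one₀ (opQ E).opNorm_nonneg opQ_norm
    calc _ ≤ 6 * (1 + C₀) * K ^ 3 * (η ^ j)⁻¹ * 1 := by
          gcongr; exact hgb _
      _ = _ := mul_one _

lemma subst_one {d : ℕ} {η : ℝ} (hη : 0 < η) (f ρ : EuclideanSpace ℝ (Fin d) → ℝ)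
    (a : EuclideanSpace ℝ (Fin d)) :
    ∫ x, f x * ((η ^ d)⁻¹ * ρ (η⁻¹ • (a - x))) = ∫ z, f (a - η • z) * ρ z := by
  rw [← integral_sub_left_eq_self _ volume a]
  simp only [sub_sub_cancel]
  have h := Measure.integral_comp_inv_smul_of_nonneg
    (volume : Measure (EuclideanSpace ℝ (Fin d)))
    (fun z => f (a - η • z) * ((η ^ d)⁻¹ * ρ z)) hη.le
  simp only [smul_inv_smul₀ hη.ne'] at h
  rw [h, finrank_euclideanSpace_fin, smul_eq_mul, ← integral_const_mul]
  congr 1; funext z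
  have : η ^ d ≠ 0 := by positivity
  field_simp

lemma haar_prod (d : ℕ) : (volume : Measure
    (EuclideanSpace ℝ (Fin d) × EuclideanSpace ℝ (Fin d))).IsAddHaarMeasure := by
  rw [Measure.volume_eq_prod]
  infer_instance

lemma strip_eq {d : ℕ} {η : ℝ} (hη : 0 < η) {ρ : EuclideanSpace ℝ (Fin d) → ℝ} (hρ : KerHyp ρ)
    {θ : ℝ → ℝ} (hθ : Continuous θ) (hθ01 : ∀ s, 0 ≤ θ s ∧ θ s ≤ 1)
    {Φ : EuclideanSpace ℝ (Fin d) × EuclideanSpace ℝ (Fin d) → ℝ} {A : ℝ}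
    (hΦm : Measurable Φ) (hΦb : ∀ x, |Φ x| ≤ A) :
    stripSmoothing ρ θ η Φ = avgT (fun z => ρ z.1 * ρ z.2) (opP _ η)
      (fun p => Φ p - (1 - θ (‖opQ _ p‖ ^ 2)) * Φ p) := by
  funext p
  have hm : StronglyMeasurable (fun p => Φ p - (1 - θ (‖opQ _ p‖ ^ 2)) * Φ p) := by
    have h1 : Measurable (fun p : EuclideanSpace ℝ (Fin d) × EuclideanSpace ℝ (Fin d) =>
        (1 - θ (‖opQ _ p‖ ^ 2))) := by
      refine Continuous.measurable ?_
      fun_prop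
    exact (hΦm.sub (h1.mul hΦm)).stronglyMeasurable
  have hb : ∀ p, ‖Φ p - (1 - θ (‖opQ (EuclideanSpace ℝ (Fin d)) p‖ ^ 2)) * Φ p‖ ≤ A := by
    intro p
    have e : Φ p - (1 - θ (‖opQ (EuclideanSpace ℝ (Fin d)) p‖ ^ 2)) * Φ p
      = θ (‖opQ (EuclideanSpace ℝ (Fin d)) p‖ ^ 2) * Φ p := by ring
    rw [e, norm_mul, Real.norm_of_nonneg (hθ01 _).1]
    have h1 := (hθ01 (‖opQ (EuclideanSpace ℝ (Fin d)) p‖ ^ 2)).2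
    calc _ ≤ 1 * A := by
          have := hΦb p
          have h3 := (abs_nonneg _).trans (hΦb p)
          rw [Real.norm_eq_abs]
          gcongr
      _ = A := one_mul A
  have := haar_prod d
  have hint := (ker_prod hρ).int_T (P := opP _ η) hm hb p
  unfold stripSmoothing avgT
  rw [Measure.volume_eq_prod] at hint ⊢
  rw [integral_prod _ hint]
  have h1 : ∀ xp : EuclideanSpace ℝ (Fin d), (∫ xm : EuclideanSpace ℝ (Fin d),
    Φ (xp + xm, xp - xm) * θ (‖xm‖ ^ 2) *
      ((η ^ d)⁻¹ * ρ (η⁻¹ • ((2 : ℝ)⁻¹ • (p.1 + p.2) - xp))) *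
      ((η ^ d)⁻¹ * ρ (η⁻¹ • ((2 : ℝ)⁻¹ • (p.1 - p.2) - xm)))) =
      (∫ z : EuclideanSpace ℝ (Fin d),
        Φ (xp + ((2 : ℝ)⁻¹ • (p.1 - p.2) - η • z), xp - ((2 : ℝ)⁻¹ • (p.1 - p.2) - η • z)) *
        θ (‖(2 : ℝ)⁻¹ • (p.1 - p.2) - η • z‖ ^ 2) * ρ z) *
      ((η ^ d)⁻¹ * ρ (η⁻¹ • ((2 : ℝ)⁻¹ • (p.1 + p.2) - xp))) := by
    intro xp
    rw [subst_one hη (fun xm => Φ (xp + xm, xp - xm) * θ (‖xm‖ ^ 2) *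
      ((η ^ d)⁻¹ * ρ (η⁻¹ • ((2 : ℝ)⁻¹ • (p.1 + p.2) - xp)))), ← integral_mul_const]
    congr 1; funext z; ring
  simp only [h1]
  rw [subst_one hη]
  congr 1; funext x
  rw [← integral_mul_const]
  congr 1; funext y
  rw [opP_apply, opQ_apply]
  have e1 : (2 : ℝ)⁻¹ • (p.1 + p.2) - η • x + ((2 : ℝ)⁻¹ • (p.1 - p.2) - η • y)
      = p.1 - η • (x + y) := by module
  have e2 : (2 : ℝ)⁻¹ • (p.1 + p.2) - η • x - ((2 : ℝ)⁻¹ • (p.1 - p.2) - η • y)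
      = p.2 - η • (x - y) := by module
  have e3 : (2 : ℝ)⁻¹ • ((p - (η • (x + y), η • (x - y))).1 - (p - (η • (x + y), η • (x - y))).2)
      = (2 : ℝ)⁻¹ • (p.1 - p.2) - η • y := by
    simp only [Prod.fst_sub, Prod.snd_sub]; module
  have e4 : p - (η • (x + y), η • (x - y)) = (p.1 - η • (x + y), p.2 - η • (x - y)) := rfl
  rw [e1, e2]
  simp only [smul_eq_mul]
  rw [e3, e4]
  ring

lemma strip_vanish {E : Type} [NormedAddCommGroup E] [NormedSpace ℝ E] [MeasureSpace E]
    {R : E × E → ℝ} {η : ℝ} (hη : 0 < η) (hη1 : η < 1)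
    {θ : ℝ → ℝ} (hθ0 : ∀ s : ℝ, 1 - 2 * η ≤ |s| → θ s = 0) (hR : ∀ z, 1 < ‖z‖ → R z = 0)
    (Φ : E × E → ℝ) {p : E × E} (hp : ¬ ‖p.1 - p.2‖ ≤ 2) :
    avgT R (opP E η) (fun p => Φ p - (1 - θ (‖opQ _ p‖ ^ 2)) * Φ p) p = 0 := by
  unfold avgT
  rw [← integral_zero (E × E) ℝ]
  congr 1; funext z
  by_cases hz : 1 < ‖z‖
  · simp [hR z hz]
  · push Not at hz
    have h1 : 1 < ‖opQ E p‖ := by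
      rw [opQ_apply, norm_smul]
      norm_num
      push Not at hp
      linarith
    have h2 : 1 - η < ‖opQ E (p - opP E η z)‖ := by
      rw [map_sub, opQP]
      have h3 := norm_sub_norm_le (opQ E p) (η • z.2)
      rw [norm_smul, Real.norm_of_nonneg hη.le] at h3
      have h4 := norm_snd_le z
      nlinarith
    have h5 : θ (‖opQ E (p - opP E η z)‖ ^ 2) = 0 := by
      apply hθ0
      rw [abs_of_nonneg (by positivity)]
      nlinarith
    simp only [h5]
    simp

end Final

/-- **Smoothing family adapted to the strip `Ω = {|x−y| ≤ 2}`.**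
With a standard mollifier `ρ` and cut-offs `θ_η` as in the cut-off lemma,
the operators `J_η` satisfy:
(J1) `J_ηΦ` is smooth, vanishes outside `Ω`, and lies in `F_3`;
(J2) `‖J_ηΦ‖_{W^{ℓ,∞}} ≤ C η^{−(ℓ−k)} ‖Φ‖_{W^{k,∞}}` for `k ≤ ℓ ≤ 3`, `ℓ−k ≤ 2`;
(J3) `‖Φ − J_ηΦ‖_{W^{ℓ,∞}} ≤ C η^{k−ℓ} ‖Φ‖_{W^{k,∞}}` for `ℓ ≤ k ≤ 3`, `k−ℓ ≤ 2`;
with `C` depending only on `d`, `ρ` and `C₀`. -/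
theorem strip_smoothing_family (d : ℕ) (hd : 1 ≤ d)
    (ρ : EuclideanSpace ℝ (Fin d) → ℝ)
    (hρ_smooth : ContDiff ℝ (⊤ : ℕ∞) ρ)
    (hρ_nonneg : ∀ x, 0 ≤ ρ x)
    (hρ_even : ∀ x, ρ (-x) = ρ x)
    (hρ_supp : ∀ x : EuclideanSpace ℝ (Fin d), 1 < ‖x‖ → ρ x = 0)
    (hρ_int : ∫ x : EuclideanSpace ℝ (Fin d), ρ x = 1)
    (C₀ : ℝ) (hC₀ : 0 < C₀) :
    ∃ C : ℝ, 0 < C ∧ ∀ η : ℝ, 0 < η → η < 1 →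
      ∀ θ : ℝ → ℝ, ContDiff ℝ (⊤ : ℕ∞) θ → HasCompactSupport θ →
        (∀ s, 0 ≤ θ s ∧ θ s ≤ 1) →
        (∀ s : ℝ, 1 - 2 * η ≤ |s| → θ s = 0) →
        (∀ s : ℝ, |s| ≤ 1 - 3 * η → θ s = 1) →
        (∀ j : ℕ, 1 ≤ j → j ≤ 3 → ∀ s, |iteratedDeriv j θ s| ≤ C₀ * (η ^ j)⁻¹) →
        -- (J1)
        (∀ (Φ : EuclideanSpace ℝ (Fin d) × EuclideanSpace ℝ (Fin d) → ℝ) (M : ℝ),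
          WBound 0 M Φ →
          (∀ p : EuclideanSpace ℝ (Fin d) × EuclideanSpace ℝ (Fin d),
            ¬ ‖p.1 - p.2‖ ≤ 2 → Φ p = 0) →
          ContDiff ℝ (⊤ : ℕ∞) (stripSmoothing ρ θ η Φ) ∧
          (∀ p : EuclideanSpace ℝ (Fin d) × EuclideanSpace ℝ (Fin d),
            ¬ ‖p.1 - p.2‖ ≤ 2 → stripSmoothing ρ θ η Φ p = 0) ∧
          ∃ A : ℝ, WBound 3 A (stripSmoothing ρ θ η Φ)) ∧
        -- (J2)
        (∀ k l : ℕ, k ≤ l → l ≤ 3 → l - k ≤ 2 →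
          ∀ (Φ : EuclideanSpace ℝ (Fin d) × EuclideanSpace ℝ (Fin d) → ℝ) (A : ℝ),
            WBound k A Φ →
            (∀ p : EuclideanSpace ℝ (Fin d) × EuclideanSpace ℝ (Fin d),
              ¬ ‖p.1 - p.2‖ ≤ 2 → Φ p = 0) →
            WBound l (C * (η ^ (l - k))⁻¹ * A) (stripSmoothing ρ θ η Φ)) ∧
        -- (J3)
        (∀ k l : ℕ, l ≤ k → k ≤ 3 → k - l ≤ 2 →
          ∀ (Φ : EuclideanSpace ℝ (Fin d) × EuclideanSpace ℝ (Fin d) → ℝ) (A : ℝ),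
            WBound k A Φ →
            (∀ p : EuclideanSpace ℝ (Fin d) × EuclideanSpace ℝ (Fin d),
              ¬ ‖p.1 - p.2‖ ≤ 2 → Φ p = 0) →
            WBound l (C * η ^ (k - l) * A)
              (fun p => Φ p - stripSmoothing ρ θ η Φ p)) := by
  have := haar_prod d
  have : Nonempty (Fin d) := ⟨⟨0, hd⟩⟩
  have hρ : KerHyp ρ := ⟨hρ_smooth, hρ_nonneg, hρ_even, hρ_supp, hρ_int⟩
  have hR := ker_prod hρ
  obtain ⟨B, hB, hcut⟩ := cutoff (E := EuclideanSpace ℝ (Fin d)) C₀ hC₀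
  set R : EuclideanSpace ℝ (Fin d) × EuclideanSpace ℝ (Fin d) → ℝ :=
    fun z => ρ z.1 * ρ z.2 with hRdef
  obtain ⟨K, hK0, hK⟩ : ∃ K : ℝ, 0 ≤ K ∧ ∀ i ≤ 3, ∫ x, ‖iteratedFDeriv ℝ i R x‖ ≤ K := by
    have h : ∀ i, 0 ≤ ∫ x, ‖iteratedFDeriv ℝ i R x‖ := fun i =>
      integral_nonneg fun _ => norm_nonneg _
    refine ⟨∑ i ∈ Finset.range 4, ∫ x, ‖iteratedFDeriv ℝ i R x‖,
      Finset.sum_nonneg fun i _ => h i, fun i hi => ?_⟩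
    exact Finset.single_le_sum (f := fun i => ∫ x, ‖iteratedFDeriv ℝ i R x‖)
      (fun i _ => h i) (Finset.mem_range.2 (by omega))
  refine ⟨(1 + 2 * K) * (2 + 1000 * B) + (9 + 5000 * B), by positivity, ?_⟩
  intro η hη hη1 θ hθ _ hθ01 hθ0 hθ1 hθb
  have hχb := hcut η hη hη1 θ hθ hθ01 hθ0 hθb
  set χ : EuclideanSpace ℝ (Fin d) × EuclideanSpace ℝ (Fin d) → ℝ :=
    fun p => 1 - θ (‖opQ _ p‖ ^ 2) with hχdef
  have hχ : ContDiff ℝ (⊤ : ℕ∞) χ :=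
    contDiff_const.sub (hθ.comp ((contDiff_norm_sq ℝ).comp (opQ (EuclideanSpace ℝ (Fin d))).contDiff))
  have hχ1 : ∀ p, |χ p| ≤ 1 := by
    intro p
    have := hθ01 (‖opQ _ p‖ ^ 2)
    rw [hχdef, abs_le]
    constructor <;> simp only <;> linarith
  have hS : ∀ p ∉ {p : EuclideanSpace ℝ (Fin d) × EuclideanSpace ℝ (Fin d) |
      1 - 3 * η ≤ ‖opQ _ p‖ ^ 2}, ∀ j, iteratedFDeriv ℝ j χ p = 0 := by
    intro p hp j
    simp only [Set.mem_ofPred_eq, not_le] at hp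
    apply iter_zero_of_eventually
    filter_upwards [(isOpen_lt ((opQ (EuclideanSpace ℝ (Fin d))).continuous.norm.pow 2)
      continuous_const).mem_nhds hp] with y hy
    have : θ (‖opQ _ y‖ ^ 2) = 1 := by
      apply hθ1
      rw [abs_of_nonneg (by positivity)]
      exact le_of_lt hy
    simp [hχdef, this]
  have hPM := opPM (E := EuclideanSpace ℝ (Fin d)) hη
  have hP := opP_norm (E := EuclideanSpace ℝ (Fin d)) hη
  have hM := opM_norm (E := EuclideanSpace ℝ (Fin d)) hη
  have heq : ∀ (Φ : EuclideanSpace ℝ (Fin d) × EuclideanSpace ℝ (Fin d) → ℝ) (k : ℕ) (A : ℝ),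
      WBound k A Φ → stripSmoothing ρ θ η Φ = avgT R (opP _ η) (fun p => Φ p - χ p * Φ p) := by
    intro Φ k A h
    exact strip_eq hη hρ hθ.continuous hθ01 (W_sm h).measurable (W_bd h)
  have hJ2 : ∀ k l : ℕ, k ≤ l → l ≤ 3 →
      ∀ (Φ : EuclideanSpace ℝ (Fin d) × EuclideanSpace ℝ (Fin d) → ℝ) (A : ℝ),
        WBound k A Φ →
        (∀ p : EuclideanSpace ℝ (Fin d) × EuclideanSpace ℝ (Fin d),
          ¬ ‖p.1 - p.2‖ ≤ 2 → Φ p = 0) →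
        WBound l (((1 + 2 * K) * (2 + 1000 * B)) * (η ^ (l - k))⁻¹ * A)
          (stripSmoothing ρ θ η Φ) := by
    intro k l hkl hl Φ A hΦ hΦ0
    rw [heq Φ k A hΦ]
    exact absJ2 hη hη1 hB hχ hχb hS hχ1 (fun p hp => exists_q hη hΦ0 hp) hR hPM hP hM hK
      hkl hl hΦ
  refine ⟨?_, ?_, ?_⟩
  · intro Φ A hΦ hΦ0
    refine ⟨?_, ?_, ⟨_, hJ2 0 3 (by norm_num) le_rfl Φ A hΦ hΦ0⟩⟩
    · rw [heq Φ 0 A hΦ]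
      have hG := absG hη hη1 hB hχ hχb hS hχ1 (fun p hp => exists_q hη hΦ0 hp)
        (by norm_num) hΦ
      exact hR.T_smooth _ hPM (W_sm hG) (W_bd hG)
    · intro p hp
      rw [heq Φ 0 A hΦ]
      exact strip_vanish hη hη1 hθ0 hR.supp Φ hp
  · intro k l hkl hl _ Φ A hΦ hΦ0
    have hA := W_nonneg hΦ
    refine W_mono (hJ2 k l hkl hl Φ A hΦ hΦ0) ?_
    have : 0 ≤ 9 + 5000 * B := by positivity
    gcongr
    linarith
  · intro k l hkl hk h2 Φ A hΦ hΦ0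
    have hA := W_nonneg hΦ
    rw [heq Φ k A hΦ]
    refine W_mono (absJ3 hη hη1 hB hχ hχb hS hχ1 (fun p hp => exists_q hη hΦ0 hp) hR hPM hP
      hkl hk h2 hΦ) ?_
    have : 0 ≤ (1 + 2 * K) * (2 + 1000 * B) := by positivity
    have h3 : 9 + 5000 * B ≤ (1 + 2 * K) * (2 + 1000 * B) + (9 + 5000 * B) := by linarith
    exact mul_le_mul_of_nonneg_right
      (mul_le_mul_of_nonneg_right h3 (pow_nonneg hη.le _)) hA
end
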